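/- arXiv:2604.05304 — 3 statements merged into one kernel-verified Lean document; each statement's English description precedes it below -/
import Mathlib

section
/- Every squarefree positive integer with at most 44 distinct prime factors is matchable. -/
/-- A positive integer `n` is matchable if there is a bijection `ψ` from the set of
divisors of `n` to `{1, 2, ..., τ(n)}` with `gcd(d, ψ(d)) = 1` for every divisor `d`. -/
def Matchable (n : ℕ) : Prop :=
  ∃ ψ : ℕ → ℕ, Set.BijOn ψ ↑n.divisors ↑(Finset.Icc 1 n.divisors.card) ∧
    ∀ d ∈ n.divisors, Nat.gcd d (ψ d) = 1

/-!
Let `Q` be odd and squarefree with set of prime factors `P`, where `#P = k ≤ 44`, and `N = 2 ^ k`.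
If `n = Q`, the divisors of `Q` have to be matched with `M = {1, ..., N}`. If `n = 2 * Q`, match an
even divisor `2 * d` with an odd number at most `2 * N` and an odd divisor with `2 * j`, where
`j ≤ N`; so the divisors of `Q` have to be matched with `M = {1, ..., N}` and once more with `M` the
set of odd numbers at most `2 * N`.

A divisor `∏ p ∈ P \ A, p` of `Q` is coprime to `m` exactly when `A` contains all primes of `P` that
divide `m`. By Hall's theorem, a matching exists as soon as, for every family `U` of subsets of `P`
closed under supersets, at most `#U` elements of `M` have their set of prime factors in `P` in `U`.

*Lower bounds for `#U`.* Let `U` contain `s` singletons and `e` pairs disjoint from them. Add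
these sets one at a time. Each earlier set has a point outside the current one, and omitting these
points gives subsets of `P` that contain the current set and none of the earlier ones: at least half
as many as were counted for the previous set of the same size. So at least
`2 ^ k * (1 - (1 + 2 ^ (-e)) / 2 ^ (s + 1))` subsets of `P` belong to `U`.

*Upper bounds for the left side.* If the prime factors in `P` of `m` form a member of `U`, then `m`
is divisible by one of these primes or pairs, or it has at least `t` prime factors in `P`, with
`t ≤ 3`. The number of multiples of an odd `d` in `M` is within a bounded error of `N / d`. The
number of `m` having at least `t` prime factors in `P` is bounded by a sieve: the indicator of
`t ≤ x` is majorised by an increasing integer combination of binomial coefficients `x.choose j`,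
which is summed over `M` by inclusion and exclusion. The main term is an expectation for independent
events of probabilities `1 / p`, so it is largest when `P` consists of the first `k` odd primes,
where it is evaluated for each `k ≤ 44`. Comparing the two kinds of bounds according to `s` and `e`
proves the inequality.
-/

open Finset

/-! ### Inclusion and exclusion -/

/-- The number of multiples of `d` in `M`. -/
def countMultiples (M : Finset ℕ) (d : ℕ) : ℕ := #{m ∈ M | d ∣ m}

/-- The integer-valued polynomial `∑ j, c j * x.choose j`, in Newton's form. -/
def newtonSum (c : ℕ → ℤ) (x : ℕ) : ℤ := ∑ j ∈ range (x + 1), c j * x.choose j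

theorem newtonSum_card {ι : Type*} (c : ℕ → ℤ) (s : Finset ι) :
    newtonSum c #s = ∑ A ∈ s.powerset, c #A := by
  simp only [sum_powerset_apply_card, newtonSum, nsmul_eq_mul, mul_comm]

theorem newtonSum_succ (c : ℕ → ℤ) (x : ℕ) :
    newtonSum c (x + 1) = newtonSum c x + newtonSum (fun j => c (j + 1)) x := by
  have hx : x ∉ range x := notMem_range_self
  have h := newtonSum_card c (insert x (range x))
  rw [sum_powerset_insert hx, ← newtonSum_card, card_insert_of_notMem hx, card_range] at h
  have hinsert : ∑ A ∈ (range x).powerset, c #(insert x A) =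
      ∑ A ∈ (range x).powerset, c (#A + 1) :=
    sum_congr rfl fun A hA => by rw [card_insert_of_notMem fun h => hx (mem_powerset.1 hA h)]
  rw [h, hinsert, ← newtonSum_card (fun j => c (j + 1)), card_range]

theorem sum_newtonSum_card_dvd {Q : Finset ℕ} (hQ : ∀ p ∈ Q, p.Prime) (M : Finset ℕ)
    (c : ℕ → ℤ) :
    ∑ m ∈ M, newtonSum c #{p ∈ Q | p ∣ m} =
      ∑ A ∈ Q.powerset, c #A * countMultiples M (∏ p ∈ A, p) := by
  have hdvd : ∀ A ⊆ Q, ∀ m, (∏ p ∈ A, p) ∣ m ↔ ∀ p ∈ A, p ∣ m := fun A hA m =>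
    ⟨fun h p hp => (dvd_prod_of_mem _ hp).trans h,
      prod_primes_dvd m fun p hp => (hQ p (hA hp)).prime⟩
  have hpowerset : ∀ m, ({p ∈ Q | p ∣ m} : Finset ℕ).powerset =
      {A ∈ Q.powerset | (∏ p ∈ A, p) ∣ m} := fun m => by
    ext A
    simp only [mem_powerset, mem_filter]
    refine ⟨fun hA => ?_, fun ⟨hA, h⟩ p hp => mem_filter.2 ⟨hA hp, (hdvd A hA m).1 h p hp⟩⟩
    have hAQ : A ⊆ Q := hA.trans (filter_subset _ _)
    exact ⟨hAQ, (hdvd A hAQ m).2 fun p hp => (mem_filter.1 (hA hp)).2⟩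
  calc ∑ m ∈ M, newtonSum c #{p ∈ Q | p ∣ m}
      = ∑ m ∈ M, ∑ A ∈ Q.powerset, if (∏ p ∈ A, p) ∣ m then c #A else 0 := by
        simp only [newtonSum_card, hpowerset, sum_filter]
    _ = ∑ A ∈ Q.powerset, c #A * countMultiples M (∏ p ∈ A, p) := by
        rw [sum_comm]
        refine sum_congr rfl fun A _ => ?_
        rw [← sum_filter, sum_const, countMultiples, nsmul_eq_mul, mul_comm]

/-! ### Independent events -/

/-- The expectation of `g X`, where `X` is the number of successes among independent events of
probabilities `1 / p`, `p ∈ l`. -/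
def successMean : List ℕ → (ℕ → ℤ) → ℚ
  | [], g => g 0
  | p :: l, g => (1 - (p : ℚ)⁻¹) * successMean l g + (p : ℚ)⁻¹ * successMean l (fun x => g (x + 1))

theorem successMean_mono (l : List ℕ) {g h : ℕ → ℤ} (hgh : ∀ x ≤ l.length, g x ≤ h x) :
    successMean l g ≤ successMean l h := by
  induction l generalizing g h with
  | nil => exact Int.cast_le.2 (hgh 0 le_rfl)
  | cons p l ih =>
    simp only [List.length_cons] at hgh
    have : (0 : ℚ) ≤ 1 - (p : ℚ)⁻¹ := sub_nonneg.2 p.cast_inv_le_one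
    simp only [successMean]
    gcongr
    · exact ih fun x hx => hgh x (by lia)
    · exact ih fun x hx => hgh (x + 1) (by lia)

theorem successMean_add (l : List ℕ) (g h : ℕ → ℤ) :
    successMean l (fun x => g x + h x) = successMean l g + successMean l h := by
  induction l generalizing g h with
  | nil => simp [successMean]
  | cons p l ih => simp only [successMean, ih]; ring

theorem successMean_le_cons (p : ℕ) {l : List ℕ} {g : ℕ → ℤ}
    (hg : ∀ x ≤ l.length, g x ≤ g (x + 1)) : successMean l g ≤ successMean (p :: l) g := by
  have hp : (0 : ℚ) ≤ (p : ℚ)⁻¹ := by positivity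
  have h := mul_le_mul_of_nonneg_left (successMean_mono l hg) hp
  simp only [successMean]
  linarith

theorem successMean_le_of_sublistForall₂ {l R : List ℕ}
    (hlR : List.SublistForall₂ (· ≥ ·) l R) (hR : ∀ q ∈ R, 0 < q) {g : ℕ → ℤ}
    (hg : ∀ x < R.length, g x ≤ g (x + 1)) : successMean l g ≤ successMean R g := by
  induction hlR generalizing g with
  | @nil R =>
    induction R with
    | nil => rfl
    | cons q R ih =>
      simp only [List.length_cons, Order.lt_add_one_iff] at hg
      exact (ih (List.forall_mem_cons.1 hR).2 fun x hx => hg x hx.le).trans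
        (successMean_le_cons q hg)
  | @cons_right q l R _ ih =>
    simp only [List.length_cons, Order.lt_add_one_iff] at hg
    exact (ih (List.forall_mem_cons.1 hR).2 fun x hx => hg x hx.le).trans (successMean_le_cons q hg)
  | @cons p q l R hqp _ ih =>
    simp only [List.length_cons, Order.lt_add_one_iff] at hg
    obtain ⟨hq, hR⟩ := List.forall_mem_cons.1 hR
    have hinv : (p : ℚ)⁻¹ ≤ (q : ℚ)⁻¹ := by gcongr
    have h01 : (0 : ℚ) ≤ 1 - (p : ℚ)⁻¹ := sub_nonneg.2 p.cast_inv_le_one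
    have hsucc : successMean R g ≤ successMean R fun x => g (x + 1) := successMean_mono R hg
    calc successMean (p :: l) g
        ≤ (1 - (p : ℚ)⁻¹) * successMean R g
            + (p : ℚ)⁻¹ * successMean R (fun x => g (x + 1)) := by
          simp only [successMean]
          gcongr
          · exact ih hR fun x hx => hg x hx.le
          · exact ih hR fun x hx => hg (x + 1) hx
      _ ≤ successMean (q :: R) g := by
          simp only [successMean]
          nlinarith [mul_le_mul_of_nonneg_right hinv (sub_nonneg.2 hsucc)]

theorem successMean_newtonSum_cons (p : ℕ) (l : List ℕ) (c : ℕ → ℤ) :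
    successMean (p :: l) (newtonSum c) =
      successMean l (newtonSum c) + (p : ℚ)⁻¹ * successMean l (newtonSum fun j => c (j + 1)) := by
  simp only [successMean, newtonSum_succ, successMean_add]
  ring

theorem successMean_newtonSum {l : List ℕ} (hl : l.Nodup) (c : ℕ → ℤ) :
    successMean l (newtonSum c) = ∑ A ∈ l.toFinset.powerset, (c #A : ℚ) / ∏ p ∈ A, p := by
  induction l generalizing c with
  | nil => simp [successMean, newtonSum]
  | cons p l ih =>
    obtain ⟨hp, hl⟩ := List.nodup_cons.1 hl
    have hp : p ∉ l.toFinset := by simpa using hp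
    rw [successMean_newtonSum_cons, ih hl, ih hl, List.toFinset_cons, sum_powerset_insert hp,
      mul_sum]
    congr 1
    refine sum_congr rfl fun A hA => ?_
    have hpA : p ∉ A := fun h => hp (mem_powerset.1 hA h)
    rw [card_insert_of_notMem hpA, prod_insert hpA, Nat.cast_mul, div_mul_eq_div_div,
      inv_mul_eq_div, div_right_comm]

theorem forall₂_ge_take_of_sorted {l R : List ℕ} (hR : R.Pairwise (· < ·))
    (hl : l.Pairwise (· < ·)) (hlR : ∀ p ∈ l, p ∈ R ∨ ∀ q ∈ R, q < p)
    (hlen : l.length ≤ R.length) : List.Forall₂ (· ≥ ·) l (R.take l.length) := by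
  induction R generalizing l with
  | nil => simp_all
  | cons q R ih =>
    cases l with
    | nil => simp
    | cons p l =>
      simp only [List.pairwise_cons, List.mem_cons, List.length_cons, forall_eq_or_imp] at *
      obtain ⟨hp, hl'⟩ := hlR
      refine List.Forall₂.cons ?_ (ih hR.2 hl.2 (fun x hx => ?_) (by lia))
      · grind
      · have := hl.1 x hx
        grind

/-! ### Elementary symmetric functions -/

/-- Multiplication of a polynomial, given by its coefficient list, by `p + X`, with a carry `b`
added to the constant coefficient. -/
def mulAddX (p : ℕ) : ℕ → List ℕ → List ℕ
  | b, [] => [b]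
  | b, a :: l => (p * a + b) :: mulAddX p a l

/-- The coefficients of `∏ (p + X)` over `p ∈ l`, lowest degree first. The entry at `j` is
`l.prod` times the `j`-th elementary symmetric function of the `1 / p`. -/
def prodAddXCoeffs : List ℕ → List ℕ
  | [] => [1]
  | p :: l => mulAddX p 0 (prodAddXCoeffs l)

/-- The sum of `c j * l[j]` over the positions `j` of `l`. -/
def weightedSum (c : ℕ → ℤ) : List ℕ → ℤ
  | [] => 0
  | a :: l => c 0 * a + weightedSum (fun j => c (j + 1)) l

theorem weightedSum_mulAddX (p b : ℕ) (l : List ℕ) (c : ℕ → ℤ) :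
    weightedSum c (mulAddX p b l) =
      c 0 * b + p * weightedSum c l + weightedSum (fun j => c (j + 1)) l := by
  induction l generalizing b c with
  | nil => simp [mulAddX, weightedSum]
  | cons a l ih =>
    simp only [mulAddX, weightedSum, ih]
    push_cast
    ring

theorem weightedSum_prodAddXCoeffs_cons (c : ℕ → ℤ) (p : ℕ) (l : List ℕ) :
    weightedSum c (prodAddXCoeffs (p :: l)) =
      p * weightedSum c (prodAddXCoeffs l) +
        weightedSum (fun j => c (j + 1)) (prodAddXCoeffs l) := by
  simp [prodAddXCoeffs, weightedSum_mulAddX]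

theorem newtonSum_eq_weightedSum (c : ℕ → ℤ) (x : ℕ) :
    newtonSum c x = weightedSum c (prodAddXCoeffs (List.replicate x 1)) := by
  induction x generalizing c with
  | zero => simp [newtonSum, prodAddXCoeffs, weightedSum]
  | succ x ih =>
    rw [newtonSum_succ, ih, ih, List.replicate_succ, weightedSum_prodAddXCoeffs_cons,
      Nat.cast_one, one_mul]

theorem prod_mul_successMean_newtonSum {l : List ℕ} (hl : ∀ p ∈ l, 0 < p) (c : ℕ → ℤ) :
    (l.prod : ℚ) * successMean l (newtonSum c) = weightedSum c (prodAddXCoeffs l) := by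
  induction l generalizing c with
  | nil => simp [successMean, newtonSum, prodAddXCoeffs, weightedSum]
  | cons p l ih =>
    obtain ⟨hp, hl⟩ := List.forall_mem_cons.1 hl
    rw [successMean_newtonSum_cons, weightedSum_prodAddXCoeffs_cons, List.prod_cons]
    push_cast [← ih hl, -Nat.cast_list_prod]
    field_simp

/-! ### The sieve -/

/-- The number of elements of `M` with at least `t` divisors in `Q`. -/
def tailCount (M Q : Finset ℕ) (t : ℕ) : ℕ := #{m ∈ M | t ≤ #{p ∈ Q | p ∣ m}}

/-- The function `newtonSum c / den` is increasing on `{0, ..., n}` and bounds the indicator of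
`t ≤ x` from above there. -/
structure IsTailMajorant (n t den : ℕ) (c : ℕ → ℤ) : Prop where
  le_newtonSum : ∀ x ≤ n, (if t ≤ x then (den : ℤ) else 0) ≤ newtonSum c x
  newtonSum_le_succ : ∀ x < n, newtonSum c x ≤ newtonSum c (x + 1)

/-- Twice the number of multiples in `M` of an odd `d`, taken with coefficient `c j`, exceeds its
main term `2 * K / d * c j` by at most `ε j`. The factor `2` makes half-integral errors integral. -/
def HasSieveError (M : Finset ℕ) (K : ℕ) (c ε : ℕ → ℤ) : Prop :=
  ∀ d, Odd d → ∀ j, (2 * countMultiples M d * c j : ℚ) ≤ 2 * K / d * c j + ε j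

theorem IsTailMajorant.mono {n n' t den : ℕ} {c : ℕ → ℤ} (h : IsTailMajorant n t den c)
    (hn : n' ≤ n) : IsTailMajorant n' t den c where
  le_newtonSum x hx := h.le_newtonSum x (hx.trans hn)
  newtonSum_le_succ x hx := h.newtonSum_le_succ x (hx.trans_le hn)

theorem IsTailMajorant.mul_tailCount_le {n t den : ℕ} {c : ℕ → ℤ}
    (hc : IsTailMajorant n t den c) (M : Finset ℕ) {Q : Finset ℕ} (hQ : #Q ≤ n) :
    (den * tailCount M Q t : ℤ) ≤ ∑ m ∈ M, newtonSum c #{p ∈ Q | p ∣ m} :=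
  calc (den * tailCount M Q t : ℤ)
      = ∑ m ∈ M, if t ≤ #{p ∈ Q | p ∣ m} then (den : ℤ) else 0 := by
        rw [← sum_filter, sum_const, tailCount, nsmul_eq_mul, mul_comm]
    _ ≤ _ := sum_le_sum fun m _ => hc.le_newtonSum _ ((card_filter_le _ _).trans hQ)

theorem newtonSum_single (t x : ℕ) : newtonSum (Pi.single t 1) x = x.choose t := by
  by_cases h : t ≤ x
  · simp [newtonSum, Pi.single_apply, h]
  · simp [newtonSum, Pi.single_apply, h, Nat.choose_eq_zero_of_lt (not_le.1 h)]

theorem isTailMajorant_single (n t : ℕ) : IsTailMajorant n t 1 (Pi.single t 1) where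
  le_newtonSum x _ := by
    rw [newtonSum_single]
    split_ifs with h
    · exact_mod_cast Nat.choose_pos h
    · positivity
  newtonSum_le_succ x _ := by
    simp only [newtonSum_single]
    exact_mod_cast Nat.choose_le_choose t x.le_succ

theorem HasSieveError.sum_newtonSum_le {M Q : Finset ℕ} {K : ℕ} {c ε : ℕ → ℤ}
    (h : HasSieveError M K c ε) (hQ : ∀ p ∈ Q, p.Prime ∧ Odd p) :
    (2 * (∑ m ∈ M, newtonSum c #{p ∈ Q | p ∣ m} : ℤ) : ℚ) ≤
      2 * K * successMean Q.sort (newtonSum c) + newtonSum ε #Q := by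
  have hodd : ∀ A ∈ Q.powerset, Odd (∏ p ∈ A, p) := fun A hA =>
    Finset.prod_induction _ Odd (fun _ _ => Odd.mul) odd_one
      fun p hp => (hQ p (mem_powerset.1 hA hp)).2
  rw [sum_newtonSum_card_dvd (fun p hp => (hQ p hp).1), successMean_newtonSum (sort_nodup Q _),
    sort_toFinset, newtonSum_card]
  push_cast
  rw [mul_sum, mul_sum, ← sum_add_distrib]
  refine sum_le_sum fun A hA => ?_
  have := h _ (hodd A hA) #A
  push_cast at this
  linear_combination this

theorem HasSieveError.tailCount_le {M Q : Finset ℕ} {K : ℕ} {c ε : ℕ → ℤ}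
    (h : HasSieveError M K c ε) (hQ : ∀ p ∈ Q, p.Prime ∧ Odd p) {R : List ℕ}
    (hR : ∀ q ∈ R, 0 < q) (hQR : List.SublistForall₂ (· ≥ ·) Q.sort R) {t den : ℕ}
    (hc : IsTailMajorant R.length t den c) :
    2 * den * tailCount M Q t * R.prod ≤
      2 * K * weightedSum c (prodAddXCoeffs R) + R.prod * newtonSum ε #Q := by
  have hcard : #Q ≤ R.length := by
    obtain ⟨l, hl, hlR⟩ := List.sublistForall₂_iff.1 hQR
    simpa using hl.length_eq.trans_le hlR.length_le
  have hmajor : (den * tailCount M Q t : ℚ) ≤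
      (∑ m ∈ M, newtonSum c #{p ∈ Q | p ∣ m} : ℤ) := by
    exact_mod_cast hc.mul_tailCount_le M hcard
  have hmean : 2 * K * successMean Q.sort (newtonSum c) ≤ 2 * K * successMean R (newtonSum c) := by
    gcongr
    exact successMean_le_of_sublistForall₂ hQR hR hc.newtonSum_le_succ
  have hsieve := h.sum_newtonSum_le hQ
  have hcount : (2 * den * tailCount M Q t : ℚ) ≤
      2 * K * successMean R (newtonSum c) + newtonSum ε #Q := by
    linear_combination 2 * hmajor + hsieve + hmean
  rw [← Int.cast_le (R := ℚ)]
  push_cast [-Nat.cast_list_prod, ← prod_mul_successMean_newtonSum hR c]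
  linear_combination (R.prod : ℚ) * hcount

/-- `M` has `N` elements, and its number `c` of multiples of an odd `d` satisfies
`N / d - (1 - α / 2) ≤ c ≤ N / d + α / 2` and `c ≤ 2 * N / d`. The initial segment of length `N` has
this property with `α = 0`, the set of the first `N` odd numbers has it with `α = 1`. -/
structure EvenlySpread (M : Finset ℕ) (N α : ℕ) : Prop where
  card_eq : #M = N
  le_one : α ≤ 1
  upper : ∀ d, Odd d → 2 * (d * countMultiples M d) ≤ 2 * N + α * d
  lower : ∀ d, Odd d → 2 * N + α * d ≤ 2 * (d * countMultiples M d) + 2 * d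
  crude : ∀ d, Odd d → d * countMultiples M d ≤ 2 * N

/-- The error of twice a divisor count in an `EvenlySpread` set, when the count is taken with
coefficient `c j`: the first term is the larger one for `0 ≤ c j`, the second one otherwise. -/
def roundingError (α : ℕ) (c : ℕ → ℤ) (j : ℕ) : ℤ := max (α * c j) ((α - 2) * c j)

theorem EvenlySpread.hasSieveError {M : Finset ℕ} {N α : ℕ} (hM : EvenlySpread M N α)
    (c : ℕ → ℤ) : HasSieveError M N c (roundingError α c) := by
  intro d hd j
  have hd0 : (0 : ℚ) < d := by exact_mod_cast hd.pos
  have hupper : (2 * countMultiples M d : ℚ) ≤ 2 * N / d + α := by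
    rw [← sub_le_iff_le_add, le_div_iff₀ hd0]
    have : (2 * (d * countMultiples M d) : ℚ) ≤ 2 * N + α * d := by exact_mod_cast hM.upper d hd
    linarith
  have hlower : (2 * N / d : ℚ) ≤ 2 * countMultiples M d + (2 - α) := by
    rw [div_le_iff₀ hd0]
    have : (2 * N + α * d : ℚ) ≤ 2 * (d * countMultiples M d) + 2 * d := by
      exact_mod_cast hM.lower d hd
    linarith
  rw [roundingError]
  push_cast
  rcases le_total 0 (c j) with hc | hc
  · have := mul_le_mul_of_nonneg_right hupper (Int.cast_nonneg hc)
    linear_combination this + le_max_left (α * c j : ℚ) ((α - 2) * c j)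
  · have := mul_le_mul_of_nonpos_right hlower (Int.cast_nonpos.2 hc)
    linear_combination this + le_max_right (α * c j : ℚ) ((α - 2) * c j)

theorem EvenlySpread.hasSieveError_single {M : Finset ℕ} {N α : ℕ} (hM : EvenlySpread M N α)
    (t : ℕ) : HasSieveError M (2 * N) (Pi.single t 1) 0 := by
  intro d hd j
  have hd0 : (0 : ℚ) < d := by exact_mod_cast hd.pos
  have hcrude : (2 * countMultiples M d : ℚ) ≤ 2 * (2 * N : ℕ) / d := by
    rw [le_div_iff₀ hd0]
    have : (d * countMultiples M d : ℚ) ≤ 2 * N := by exact_mod_cast hM.crude d hd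
    push_cast
    linarith
  have hc : (0 : ℚ) ≤ (Pi.single t 1 : ℕ → ℤ) j := by
    rw [Pi.single_apply]
    split_ifs <;> norm_num
  simpa using mul_le_mul_of_nonneg_right hcrude hc

/-! ### Numerical certificates -/

/-- The first 44 odd primes. -/
def oddPrimes : List ℕ := [3, 5, 7, 11, 13, 17, 19, 23, 29, 31, 37, 41, 43, 47, 53, 59, 61, 67, 71,
  73, 79, 83, 89, 97, 101, 103, 107, 109, 113, 127, 131, 137, 139, 149, 151, 157, 163, 167, 173,
  179, 181, 191, 193, 197]

/-- Pairs `(den, c)` such that `newtonSum c / den` is a majorant of the indicator of `t ≤ x` for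
`x ≤ 44`, increasing there. They are truncated inclusion-exclusion sums or small modifications of
these; which of them is best depends on the number of primes. -/
def tailMajorants : ℕ → List (ℕ × List ℤ)
  | 1 => [(1, [0, 1, -1, 1]), (4, [0, 4, -2, 1])]
  | 2 => [(1, [0, 0, 1, -2, 3]), (1, [0, 0, 1]), (1, [0, 0, 1, -2, 3, -4, 5]),
      (4, [0, 0, 4, -4, 2]), (8, [0, 0, 8, -4, 1])]
  | 3 => [(1, [0, 0, 0, 1, -3, 6]), (1, [0, 0, 0, 1]), (1, [0, 0, 0, 1, -3, 6, -10, 15]),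
      (4, [0, 0, 0, 4, -4, 2]), (4, [0, 0, 0, 4, -3, 1])]
  | 4 => [(4, [0, 0, 0, 0, 4, -10, 12]), (1, [0, 0, 0, 0, 1])]
  | 5 => [(1, [0, 0, 0, 0, 0, 1])]
  | _ => []

/-- The test that the bound of `HasSieveError.tailCount_le` for `R.length` primes is smaller than
`B + 1`. Denominators are cleared. -/
def sieveTest (K : ℕ) (R : List ℕ) (den : ℕ) (c ε : ℕ → ℤ) (B : ℕ) : Bool :=
  2 * K * weightedSum c (prodAddXCoeffs R) +
      R.prod * weightedSum ε (prodAddXCoeffs (List.replicate R.length 1)) <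
    2 * den * (B + 1) * R.prod

/-- The test that at most `B` elements of an `EvenlySpread M N α` have at least `t` prime factors
in a set dominated by `R`, by the union bound with at most `2 * N / d` multiples of `d` or by one
of the majorants in `tailMajorants`. -/
def tailTest (t α N : ℕ) (R : List ℕ) (B : ℕ) : Bool :=
  sieveTest (2 * N) R 1 (Pi.single t 1) 0 B ||
    (tailMajorants t).any fun (den, c) =>
      sieveTest N R den (c.getD · 0) (roundingError α (c.getD · 0)) B

theorem isTailMajorant_of_mem_tailMajorants {t den : ℕ} {c : List ℤ}
    (h : (den, c) ∈ tailMajorants t) (ht : t < 6) :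
    0 < den ∧ IsTailMajorant 44 t den (c.getD · 0) := by
  have hall : ∀ t < 6, ∀ q ∈ tailMajorants t, 0 < q.1 ∧ ∀ x < 45,
      (if t ≤ x then (q.1 : ℤ) else 0) ≤
        weightedSum (q.2.getD · 0) (prodAddXCoeffs (List.replicate x 1)) ∧
      0 ≤ weightedSum (fun j => q.2.getD (j + 1) 0) (prodAddXCoeffs (List.replicate x 1)) := by
    decide +kernel
  simp only [← newtonSum_eq_weightedSum] at hall
  obtain ⟨hden, hc⟩ := hall t ht _ h
  refine ⟨hden, fun x hx => (hc x (by lia)).1, fun x hx => ?_⟩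
  rw [newtonSum_succ]
  exact le_add_of_nonneg_right (hc x (by lia)).2

theorem HasSieveError.tailCount_le_of_sieveTest {M Q : Finset ℕ} {K : ℕ} {c ε : ℕ → ℤ}
    (h : HasSieveError M K c ε) (hQ : ∀ p ∈ Q, p.Prime ∧ Odd p) {R : List ℕ}
    (hR : ∀ q ∈ R, 0 < q) (hQR : List.Forall₂ (· ≥ ·) Q.sort R) {t den B : ℕ} (hden : 0 < den)
    (hc : IsTailMajorant R.length t den c) (htest : sieveTest K R den c ε B) :
    tailCount M Q t ≤ B := by
  have hcard : #Q = R.length := by simpa using hQR.length_eq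
  have hsieve := h.tailCount_le hQ hR (List.sublistForall₂_iff.2 ⟨R, hQR, .refl R⟩) hc
  rw [newtonSum_eq_weightedSum, hcard] at hsieve
  have hlt := hsieve.trans_lt (of_decide_eq_true htest)
  have hpos : (0 : ℤ) < 2 * den * R.prod := by
    have := List.prod_pos hR
    positivity
  have : (tailCount M Q t : ℤ) < B + 1 :=
    lt_of_mul_lt_mul_right (by linear_combination hlt) hpos.le
  lia

theorem EvenlySpread.tailCount_le_of_tailTest {M Q : Finset ℕ} {N α : ℕ}
    (hM : EvenlySpread M N α) (hQ : ∀ p ∈ Q, p.Prime ∧ Odd p) {R : List ℕ}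
    (hR : ∀ q ∈ R, 0 < q) (hQR : List.Forall₂ (· ≥ ·) Q.sort R) (hlen : R.length ≤ 44) {t B : ℕ}
    (ht : t < 6) (htest : tailTest t α N R B) : tailCount M Q t ≤ B := by
  rw [tailTest, Bool.or_eq_true, List.any_eq_true] at htest
  rcases htest with htest | ⟨⟨den, c⟩, hmem, htest⟩
  · exact (hM.hasSieveError_single t).tailCount_le_of_sieveTest hQ hR hQR one_pos
      (isTailMajorant_single _ t) htest
  · obtain ⟨hden, hc⟩ := isTailMajorant_of_mem_tailMajorants hmem ht
    exact (hM.hasSieveError _).tailCount_le_of_sieveTest hQ hR hQR hden (hc.mono hlen) htest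

/-! ### Numbers with many prime factors -/

theorem pos_of_mem_oddPrimes : ∀ q ∈ oddPrimes, 0 < q := by decide

theorem oddPrimes_sorted : oddPrimes.Pairwise (· < ·) := by decide +kernel

theorem mem_oddPrimes_or_forall_lt {p : ℕ} (hp : p.Prime) (hodd : Odd p) :
    p ∈ oddPrimes ∨ ∀ q ∈ oddPrimes, q < p := by
  rcases lt_or_ge p 198 with h | h
  · have : ∀ p < 198, p.Prime → Odd p → p ∈ oddPrimes := by decide +kernel
    exact Or.inl (this p h hp hodd)
  · have : ∀ q ∈ oddPrimes, q < 198 := by decide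
    exact Or.inr fun q hq => (this q hq).trans_le h

theorem forall₂_sort_take {Q : Finset ℕ} {R : List ℕ} (hR : R.Pairwise (· < ·))
    (hQR : ∀ p ∈ Q, p ∈ R ∨ ∀ q ∈ R, q < p) (hcard : #Q ≤ R.length) :
    List.Forall₂ (· ≥ ·) Q.sort (R.take #Q) := by
  simpa using forall₂_ge_take_of_sorted hR (sortedLT_sort Q).pairwise
    (fun p hp => hQR p ((mem_sort _).1 hp)) (by simpa using hcard)

section TailBounds

variable {M P : Finset ℕ} {α : ℕ}

theorem EvenlySpread.mul_tailCount_le (hM : EvenlySpread M (2 ^ #P) α)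
    (hP : ∀ p ∈ P, p.Prime ∧ Odd p) (hcard : #P ≤ 44) {t a b : ℕ} (ht : t < 6)
    (htest : ∀ k < 45, ∀ α < 2, tailTest t α (2 ^ k) (oddPrimes.take k) (b * 2 ^ k / a)) :
    a * tailCount M P t ≤ b * 2 ^ #P := by
  have hQR := forall₂_sort_take oddPrimes_sorted
    (fun p hp => mem_oddPrimes_or_forall_lt (hP p hp).1 (hP p hp).2) hcard
  refine (Nat.mul_le_mul_left a ?_).trans (Nat.mul_div_le _ a)
  exact hM.tailCount_le_of_tailTest hP
    (fun q hq => pos_of_mem_oddPrimes q (List.mem_of_mem_take hq)) hQR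
    (by simp [oddPrimes]) ht (htest _ (by lia) _ (by have := hM.le_one; lia))

theorem EvenlySpread.mul_tailCount_erase_three_le (hM : EvenlySpread M (2 ^ #P) α)
    (hP : ∀ p ∈ P, p.Prime ∧ Odd p) (hcard : #P ≤ 44) (h3 : 3 ∈ P) {t a b : ℕ} (ht : t < 6)
    (htest : ∀ k < 45, ∀ α < 2,
      tailTest t α (2 ^ k) (oddPrimes.tail.take (k - 1)) (b * 2 ^ k / a)) :
    a * tailCount M (P.erase 3) t ≤ b * 2 ^ #P := by
  have hPe : ∀ p ∈ P.erase 3, p.Prime ∧ Odd p := fun p hp => hP p (mem_of_mem_erase hp)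
  have htail : ∀ p ∈ P.erase 3, p ∈ oddPrimes.tail ∨ ∀ q ∈ oddPrimes.tail, q < p := by
    intro p hp
    have := mem_oddPrimes_or_forall_lt (hPe p hp).1 (hPe p hp).2
    rw [show oddPrimes = 3 :: oddPrimes.tail from rfl, List.mem_cons, List.forall_mem_cons] at this
    exact this.imp (Or.resolve_left · (ne_of_mem_erase hp)) And.right
  have hQR := forall₂_sort_take oddPrimes_sorted.tail htail
    (by rw [card_erase_of_mem h3]; simp [oddPrimes]; lia)
  rw [card_erase_of_mem h3] at hQR
  refine (Nat.mul_le_mul_left a ?_).trans (Nat.mul_div_le _ a)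
  exact hM.tailCount_le_of_tailTest hPe
    (fun q hq => pos_of_mem_oddPrimes q (List.mem_of_mem_tail (List.mem_of_mem_take hq)))
    hQR (by simp [oddPrimes]) ht (htest _ (by lia) _ (by have := hM.le_one; lia))

theorem EvenlySpread.tailCount_one_le (hM : EvenlySpread M (2 ^ #P) α)
    (hP : ∀ p ∈ P, p.Prime ∧ Odd p) (hcard : #P ≤ 44) :
    32 * tailCount M P 1 ≤ 29 * 2 ^ #P :=
  hM.mul_tailCount_le hP hcard (by norm_num) (by decide +kernel)

theorem EvenlySpread.tailCount_two_le (hM : EvenlySpread M (2 ^ #P) α)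
    (hP : ∀ p ∈ P, p.Prime ∧ Odd p) (hcard : #P ≤ 44) :
    64 * tailCount M P 2 ≤ 31 * 2 ^ #P :=
  hM.mul_tailCount_le hP hcard (by norm_num) (by decide +kernel)

theorem EvenlySpread.tailCount_three_le (hM : EvenlySpread M (2 ^ #P) α)
    (hP : ∀ p ∈ P, p.Prime ∧ Odd p) (hcard : #P ≤ 44) :
    1000 * tailCount M P 3 ≤ 182 * 2 ^ #P :=
  hM.mul_tailCount_le hP hcard (by norm_num) (by decide +kernel)

theorem EvenlySpread.tailCount_erase_three_two_le (hM : EvenlySpread M (2 ^ #P) α)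
    (hP : ∀ p ∈ P, p.Prime ∧ Odd p) (hcard : #P ≤ 44) (h3 : 3 ∈ P) :
    1000 * tailCount M (P.erase 3) 2 ≤ 308 * 2 ^ #P :=
  hM.mul_tailCount_erase_three_le hP hcard h3 (by norm_num) (by decide +kernel)

theorem EvenlySpread.tailCount_erase_three_three_le (hM : EvenlySpread M (2 ^ #P) α)
    (hP : ∀ p ∈ P, p.Prime ∧ Odd p) (hcard : #P ≤ 44) (h3 : 3 ∈ P) :
    1000 * tailCount M (P.erase 3) 3 ≤ 150 * 2 ^ #P :=
  hM.mul_tailCount_erase_three_le hP hcard h3 (by norm_num) (by decide +kernel)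

theorem EvenlySpread.two_pow_mul_tailCount_le_of_six_le (hM : EvenlySpread M (2 ^ #P) α)
    (hP : ∀ p ∈ P, p.Prime ∧ Odd p) (hcard : #P ≤ 44) {t : ℕ} (ht : 6 ≤ t) (ht' : t ≤ 44) :
    2 ^ t * tailCount M P t ≤ 2 ^ #P := by
  have htest : ∀ t < 45, 6 ≤ t →
      2 * 2 ^ t * weightedSum (Pi.single t 1) (prodAddXCoeffs oddPrimes) ≤ oddPrimes.prod := by
    decide +kernel
  have hQR := List.sublistForall₂_iff.2 ⟨_, forall₂_sort_take oddPrimes_sorted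
    (fun p hp => mem_oddPrimes_or_forall_lt (hP p hp).1 (hP p hp).2) hcard, List.take_sublist _ _⟩
  have hsieve := (hM.hasSieveError_single t).tailCount_le hP pos_of_mem_oddPrimes hQR
    (isTailMajorant_single _ t)
  have hprod : (0 : ℤ) < oddPrimes.prod := by exact_mod_cast List.prod_pos pos_of_mem_oddPrimes
  have : (2 ^ t * tailCount M P t : ℤ) ≤ 2 ^ #P := by
    refine le_of_mul_le_mul_right ?_ hprod
    simp only [newtonSum, Pi.zero_apply, zero_mul, sum_const_zero] at hsieve
    push_cast [-Nat.cast_list_prod] at hsieve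
    have hhalf : (tailCount M P t * oddPrimes.prod : ℤ) ≤
        2 * 2 ^ #P * weightedSum (Pi.single t 1) (prodAddXCoeffs oddPrimes) := by linarith
    linear_combination (2 ^ t : ℤ) * hhalf + (2 ^ #P : ℤ) * htest t (by lia) ht
  exact_mod_cast this

theorem EvenlySpread.two_pow_mul_tailCount_le (hM : EvenlySpread M (2 ^ #P) α)
    (hP : ∀ p ∈ P, p.Prime ∧ Odd p) (hcard : #P ≤ 44) {t : ℕ} (ht : 4 ≤ t) (ht' : t ≤ 44) :
    2 ^ t * tailCount M P t ≤ 2 ^ #P := by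
  obtain rfl | rfl | ht : t = 4 ∨ t = 5 ∨ 6 ≤ t := by lia
  · simpa using hM.mul_tailCount_le hP hcard (t := 4) (a := 16) (b := 1) (by norm_num)
      (by decide +kernel)
  · simpa using hM.mul_tailCount_le hP hcard (t := 5) (a := 32) (b := 1) (by norm_num)
      (by decide +kernel)
  · exact hM.two_pow_mul_tailCount_le_of_six_le hP hcard ht ht'

end TailBounds

/-! ### Upper families -/

section UpperFamily

variable {ι : Type*} {P : Finset ι} {U E F : Finset (Finset ι)}

/-- A family `U` of subsets of `P` closed under passing to larger subsets of `P`. -/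
structure IsUpperFamily (P : Finset ι) (U : Finset (Finset ι)) : Prop where
  subset : ∀ A ∈ U, A ⊆ P
  mem_of_subset : ∀ A ∈ U, ∀ B ⊆ P, A ⊆ B → B ∈ U

section Generated

variable [DecidableEq ι]

/-- The upper family of subsets of `P` generated by `E`. -/
def upperFamilyOf (P : Finset ι) (E : Finset (Finset ι)) : Finset (Finset ι) :=
  {A ∈ P.powerset | ∃ B ∈ E, B ⊆ A}

theorem IsUpperFamily.upperFamilyOf_subset (hU : IsUpperFamily P U) (hE : E ⊆ U) :
    upperFamilyOf P E ⊆ U := by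
  intro A hA
  obtain ⟨hAP, B, hB, hBA⟩ := mem_filter.1 hA
  exact hU.mem_of_subset B (hE hB) A (mem_powerset.1 hAP) hBA

theorem two_pow_card_le_mul_card_supersets_avoiding {B : Finset ι} (hB : B ⊆ P)
    (hE : ∀ C ∈ E, ¬ C ⊆ B) :
    2 ^ #P ≤ 2 ^ (#B + #E) * #{A ∈ P.powerset | B ⊆ A ∧ ∀ C ∈ E, ¬ C ⊆ A} := by
  choose z hzC hzB using fun C : E => not_subset.1 (hE C C.2)
  have hBZ : B ⊆ P \ univ.image z :=
    subset_sdiff.2 ⟨hB, disjoint_left.2 fun p hpB hpZ => by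
      obtain ⟨C, -, rfl⟩ := mem_image.1 hpZ
      exact hzB C hpB⟩
  have hIcc : Icc B (P \ univ.image z) ⊆ {A ∈ P.powerset | B ⊆ A ∧ ∀ C ∈ E, ¬ C ⊆ A} := by
    intro A hA
    obtain ⟨hBA, hAP, hAZ⟩ := (mem_Icc.1 hA).imp_right subset_sdiff.1
    exact mem_filter.2 ⟨mem_powerset.2 hAP, hBA, fun C hC hCA =>
      disjoint_left.1 hAZ (hCA (hzC ⟨C, hC⟩)) (mem_image_of_mem z (mem_univ _))⟩
  have hcard : #P ≤ #B + #E + (#(P \ univ.image z) - #B) := by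
    have := le_card_sdiff (univ.image z) P
    have : #(univ.image z) ≤ #E := card_image_le.trans (card_attach (s := E)).le
    lia
  calc 2 ^ #P ≤ 2 ^ (#B + #E + (#(P \ univ.image z) - #B)) :=
        Nat.pow_le_pow_right two_pos hcard
    _ = 2 ^ (#B + #E) * #(Icc B (P \ univ.image z)) := by rw [card_Icc_finset hBZ, pow_add]
    _ ≤ _ := Nat.mul_le_mul_left _ (card_le_card hIcc)

theorem card_upperFamilyOf_insert (B : Finset ι) :
    #(upperFamilyOf P (insert B E)) =
      #(upperFamilyOf P E) + #{A ∈ P.powerset | B ⊆ A ∧ ∀ C ∈ E, ¬ C ⊆ A} := by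
  rw [upperFamilyOf, upperFamilyOf, ← card_union_of_disjoint, ← filter_or]
  · congr 1
    ext A
    simp only [mem_filter, exists_mem_insert]
    grind
  · exact disjoint_filter.2 fun A _ ⟨C, hC, hCA⟩ h => h.2 C hC hCA

-- The members of `F` are added one at a time: the `i`-th one (from 0) contributes at least
-- `2 ^ #P / 2 ^ (r + #E + i)` new sets, and these terms form a geometric series.
theorem card_upperFamilyOf_add_le_union {r : ℕ} (hF : ∀ B ∈ F, B ⊆ P ∧ #B = r)
    (hEF : ∀ B ∈ F, ∀ C ∈ E, ¬ C ⊆ B) :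
    (#(upperFamilyOf P E) + 2 ^ #P * (2 * (1 - (1 / 2) ^ #F) * (1 / 2) ^ (r + #E)) : ℚ) ≤
      #(upperFamilyOf P (E ∪ F)) := by
  induction F using Finset.induction_on with
  | empty => simp
  | insert B F hBF ih =>
    have ih := ih (fun C hC => hF C (mem_insert_of_mem hC))
      fun C hC => hEF C (mem_insert_of_mem hC)
    obtain ⟨hBP, hBr⟩ := hF B (mem_insert_self B F)
    have hnew := two_pow_card_le_mul_card_supersets_avoiding (E := E ∪ F) hBP fun C hC hCB => by
      rcases mem_union.1 hC with hC | hC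
      · exact hEF B (mem_insert_self B F) C hC hCB
      · have hCB := eq_of_subset_of_card_le hCB (by rw [hBr, (hF C (mem_insert_of_mem hC)).2])
        exact hBF (hCB ▸ hC)
    set new := #{A ∈ P.powerset | B ⊆ A ∧ ∀ C ∈ E ∪ F, ¬ C ⊆ A}
    have hnew' : (2 ^ #P * (1 / 2) ^ (r + #E + #F) : ℚ) ≤ new := by
      have hpow : 2 ^ #P ≤ 2 ^ (r + #E + #F) * new :=
        hnew.trans (Nat.mul_le_mul_right _ (Nat.pow_le_pow_right two_pos
          (by have := card_union_le E F; lia)))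
      rw [one_div, inv_pow, ← div_eq_mul_inv, div_le_iff₀' (by positivity)]
      exact_mod_cast hpow
    rw [union_insert, card_upperFamilyOf_insert, card_insert_of_notMem hBF]
    push_cast
    calc _ = #(upperFamilyOf P E) + 2 ^ #P * (2 * (1 - (1 / 2) ^ #F) * (1 / 2) ^ (r + #E)) +
            (2 ^ #P * (1 / 2) ^ (r + #E + #F) : ℚ) := by ring
      _ ≤ _ := add_le_add ih hnew'

end Generated

theorem IsUpperFamily.le_card_of_card_eq {r : ℕ} (hU : IsUpperFamily P U) (hF : F ⊆ U)
    (hr : ∀ B ∈ F, #B = r) : (2 ^ #P * (2 * (1 - (1 / 2) ^ #F) * (1 / 2) ^ r) : ℚ) ≤ #U := by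
  classical
  have h := card_upperFamilyOf_add_le_union (E := ∅)
    (fun B hB => ⟨hU.subset B (hF hB), hr B hB⟩) (by simp)
  have hsub : (#(upperFamilyOf P F) : ℚ) ≤ #U :=
    mod_cast card_le_card (hU.upperFamilyOf_subset hF)
  rw [empty_union, card_empty, add_zero] at h
  exact (le_add_of_nonneg_left (Nat.cast_nonneg _)).trans (h.trans hsub)

theorem IsUpperFamily.two_pow_card_le_of_mem (hU : IsUpperFamily P U) {A : Finset ι}
    (hA : A ∈ U) : 2 ^ #P ≤ 2 ^ #A * #U := by
  have h := hU.le_card_of_card_eq (F := {A}) (r := #A) (by simpa using hA) (by simp)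
  have : (2 ^ #P * (1 / 2) ^ #A : ℚ) ≤ #U := by
    rw [card_singleton] at h
    linarith
  rw [one_div, inv_pow, ← div_eq_mul_inv, div_le_iff₀' (by positivity)] at this
  exact_mod_cast this

theorem IsUpperFamily.three_mul_two_pow_card_le (hU : IsUpperFamily P U) {A B : Finset ι}
    (hA : A ∈ U) (hB : B ∈ U) (hAB : A ≠ B) (hA3 : #A = 3) (hB3 : #B = 3) :
    3 * 2 ^ #P ≤ 16 * #U := by
  classical
  have h := hU.le_card_of_card_eq (F := {A, B}) (r := 3) (by grind) (by grind)
  rw [card_pair hAB] at h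
  have : (3 * 2 ^ #P : ℚ) ≤ 16 * #U := by linarith
  exact_mod_cast this

theorem IsUpperFamily.le_card_of_singletons_of_pairs (hU : IsUpperFamily P U) {S : Finset ι}
    (hS : ∀ p ∈ S, {p} ∈ U) (hE : ∀ B ∈ E, B ∈ U ∧ Disjoint B S ∧ #B = 2) :
    (2 ^ #P * (1 - (1 + (1 / 2) ^ #E) * (1 / 2) ^ (#S + 1)) : ℚ) ≤ #U := by
  classical
  set singles : Finset (Finset ι) := S.map ⟨singleton, singleton_injective⟩
  have hsingles : singles ⊆ U := by
    intro B hB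
    obtain ⟨p, hp, rfl⟩ := mem_map.1 hB
    exact hS p hp
  have hcard : #singles = #S := card_map _
  have h₁ := card_upperFamilyOf_add_le_union (E := ∅) (F := singles) (r := 1)
    (fun B hB => ⟨hU.subset B (hsingles hB), by
      obtain ⟨p, -, rfl⟩ := mem_map.1 hB
      exact card_singleton p⟩) (by simp)
  have h₂ := card_upperFamilyOf_add_le_union (E := singles) (F := E) (r := 2)
    (fun B hB => ⟨hU.subset B (hE B hB).1, (hE B hB).2.2⟩) fun B hB C hC hCB => by
      obtain ⟨p, hp, rfl⟩ := mem_map.1 hC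
      exact disjoint_left.1 (hE B hB).2.1 (hCB (mem_singleton_self p)) hp
  have hsub : (#(upperFamilyOf P (singles ∪ E)) : ℚ) ≤ #U := by
    exact_mod_cast card_le_card (hU.upperFamilyOf_subset
      (union_subset hsingles fun B hB => (hE B hB).1))
  rw [empty_union, hcard, card_empty] at h₁
  rw [hcard] at h₂
  have : (0 : ℚ) ≤ #(upperFamilyOf P ∅) := Nat.cast_nonneg _
  ring_nf at h₁ h₂ ⊢
  linarith

theorem IsUpperFamily.two_pow_mul_two_pow_card_le (hU : IsUpperFamily P U) {S : Finset ι}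
    {s e : ℕ} (hS : ∀ p ∈ S, {p} ∈ U) (hE : ∀ B ∈ E, B ∈ U ∧ Disjoint B S ∧ #B = 2)
    (hs : s ≤ #S) (he : e ≤ #E) :
    2 ^ (s + e + 1) * 2 ^ #P ≤ 2 ^ (s + e + 1) * #U + 2 ^ #P * (2 ^ e + 1) := by
  obtain ⟨S', hS', rfl⟩ := exists_subset_card_eq hs
  obtain ⟨E', hE', rfl⟩ := exists_subset_card_eq he
  have hlower := hU.le_card_of_singletons_of_pairs (fun p hp => hS p (hS' hp)) fun B hB =>
    (hE B (hE' hB)).imp_right (And.imp_left (disjoint_of_subset_right hS'))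
  have : (2 ^ (#S' + #E' + 1) * 2 ^ #P : ℚ) ≤
      2 ^ (#S' + #E' + 1) * #U + 2 ^ #P * (2 ^ #E' + 1) :=
    calc (2 ^ (#S' + #E' + 1) * 2 ^ #P : ℚ)
        = 2 ^ (#S' + #E' + 1) * (2 ^ #P * (1 - (1 + (1 / 2) ^ #E') * (1 / 2) ^ (#S' + 1))) +
            2 ^ #P * (2 ^ #E' + 1) := by
          simp only [one_div, inv_pow]
          field_simp
          ring
      _ ≤ _ := by gcongr
  exact_mod_cast this

end UpperFamily

/-! ### Sums and products over sets of odd numbers -/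

section OddNumbers

variable {S : Finset ℕ} {a m : ℕ}

theorem add_two_mul_card_le_of_odd (ha : Odd a) (hS : ∀ p ∈ S, Odd p ∧ a ≤ p ∧ p < m)
    (hm : Odd m) (ham : a ≤ m) : a + 2 * #S ≤ m := by
  have hsub : S ⊆ (range ((m - a) / 2)).image (a + 2 * ·) := by
    intro p hp
    obtain ⟨hodd, hap, hpm⟩ := hS p hp
    refine mem_image.2 ⟨(p - a) / 2, mem_range.2 ?_, ?_⟩ <;> grind
  have := (card_le_card hsub).trans card_image_le
  rw [card_range] at this
  lia

theorem sum_le_sum_range_of_odd {f g : ℕ → ℕ}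
    (hfg : ∀ p q, Odd p → a ≤ q → q ≤ p → f p ≤ g q) (ha : Odd a) (hS : ∀ p ∈ S, Odd p ∧ a ≤ p) :
    ∑ p ∈ S, f p ≤ ∑ i ∈ range #S, g (a + 2 * i) := by
  induction S using Finset.induction_on_max with
  | empty => simp
  | insert m S hlt ih =>
    have hmS : m ∉ S := fun hm => (hlt m hm).false
    obtain ⟨hm, ham⟩ := hS m (mem_insert_self m S)
    have hS' := fun p hp => hS p (mem_insert_of_mem hp)
    have hcard := add_two_mul_card_le_of_odd ha
      (fun p hp => ⟨(hS' p hp).1, (hS' p hp).2, hlt p hp⟩) hm ham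
    rw [sum_insert hmS, card_insert_of_notMem hmS, sum_range_succ, add_comm]
    exact add_le_add (ih hS') (hfg _ _ hm (Nat.le_add_right _ _) hcard)

theorem prod_range_le_prod_of_odd (ha : Odd a) (hS : ∀ p ∈ S, Odd p ∧ a ≤ p) :
    ∏ i ∈ range #S, (a + 2 * i) ≤ ∏ p ∈ S, p := by
  induction S using Finset.induction_on_max with
  | empty => simp
  | insert m S hlt ih =>
    have hmS : m ∉ S := fun hm => (hlt m hm).false
    obtain ⟨hm, ham⟩ := hS m (mem_insert_self m S)
    have hS' := fun p hp => hS p (mem_insert_of_mem hp)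
    have hcard := add_two_mul_card_le_of_odd ha
      (fun p hp => ⟨(hS' p hp).1, (hS' p hp).2, hlt p hp⟩) hm ham
    rw [prod_insert hmS, card_insert_of_notMem hmS, prod_range_succ, mul_comm]
    exact Nat.mul_le_mul hcard (ih hS')

end OddNumbers

section MultiplesOfOddNumbers

variable {M : Finset ℕ} {N α : ℕ}

theorem EvenlySpread.countMultiples_le (hM : EvenlySpread M N α) {d q : ℕ} (hd : Odd d)
    (hq : 0 < q) (hqd : q ≤ d) : countMultiples M d ≤ (2 * N + q) / (2 * q) := by
  have hupper := hM.upper d hd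
  have hα := Nat.mul_le_mul_right d hM.le_one
  rw [Nat.le_div_iff_mul_le (by lia)]
  refine Nat.le_of_mul_le_mul_left ?_ hd.pos
  nlinarith [Nat.mul_le_mul_right N hqd]

theorem EvenlySpread.sum_countMultiples_le (hM : EvenlySpread M N α) {S : Finset ℕ} {a : ℕ}
    (ha : Odd a) (hS : ∀ p ∈ S, Odd p ∧ a ≤ p) :
    ∑ p ∈ S, countMultiples M p ≤
      ∑ i ∈ range #S, (2 * N + (a + 2 * i)) / (2 * (a + 2 * i)) :=
  sum_le_sum_range_of_odd (g := fun q => (2 * N + q) / (2 * q))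
    (fun _ _ hp haq hqp => hM.countMultiples_le hp (ha.pos.trans_le haq) hqp) ha hS

theorem EvenlySpread.countMultiples_prod_le (hM : EvenlySpread M N α) {B : Finset ℕ} {c : ℕ}
    (hB : ∀ p ∈ B, Odd p ∧ 3 ≤ p) (hc : 0 < c) (hcB : c ≤ ∏ i ∈ range #B, (3 + 2 * i)) :
    countMultiples M (∏ p ∈ B, p) ≤ (2 * N + c) / (2 * c) :=
  hM.countMultiples_le (prod_induction _ _ (fun _ _ => Odd.mul) odd_one fun p hp => (hB p hp).1) hc
    (hcB.trans (prod_range_le_prod_of_odd (by decide) hB))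

end MultiplesOfOddNumbers

/-! ### Hall's inequality -/

section Hits

variable {M P : Finset ℕ} {U : Finset (Finset ℕ)}

theorem tailCount_mono {Q Q' : Finset ℕ} (h : Q ⊆ Q') (t : ℕ) :
    tailCount M Q t ≤ tailCount M Q' t :=
  card_le_card (monotone_filter_right _ fun _ _ ht =>
    ht.trans (card_le_card (filter_subset_filter _ h)))

/-- The elements `m` of `M` such that the set of those `p ∈ P` that divide `m` belongs to `U`. -/
def hits (M P : Finset ℕ) (U : Finset (Finset ℕ)) : Finset ℕ := {m ∈ M | {p ∈ P | p ∣ m} ∈ U}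

/-- The points of `P` whose singleton belongs to `U`. If `∅ ∉ U`, these singletons are the minimal
members of `U` of cardinality one. -/
def minimalPoints (P : Finset ℕ) (U : Finset (Finset ℕ)) : Finset ℕ := {p ∈ P | {p} ∈ U}

/-- The pairs in `U` that contain no point of `minimalPoints P U`. If `∅ ∉ U`, these are the minimal
members of `U` of cardinality two. -/
def minimalPairs (P : Finset ℕ) (U : Finset (Finset ℕ)) : Finset (Finset ℕ) :=
  {B ∈ (P \ minimalPoints P U).powersetCard 2 | B ∈ U}

theorem minimalPoints_subset : minimalPoints P U ⊆ P := filter_subset _ _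

theorem mem_minimalPairs {B : Finset ℕ} : B ∈ minimalPairs P U ↔
    (B ⊆ P ∧ Disjoint B (minimalPoints P U) ∧ #B = 2) ∧ B ∈ U := by
  rw [minimalPairs, mem_filter, mem_powersetCard, subset_sdiff, and_assoc (b := Disjoint _ _)]

theorem card_hits_le_of_cover (hP : ∀ p ∈ P, p.Prime) {S Q : Finset ℕ}
    {E : Finset (Finset ℕ)} {t : ℕ} (h : ∀ A ∈ U, A ⊆ P →
      (∃ p ∈ S, p ∈ A) ∨ (∃ B ∈ E, B ⊆ A) ∨ t ≤ #(A ∩ Q)) :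
    #(hits M P U) ≤
      ∑ p ∈ S, countMultiples M p + ∑ B ∈ E, countMultiples M (∏ p ∈ B, p) +
        tailCount M Q t := by
  have hsub : hits M P U ⊆ (S.biUnion fun p => {m ∈ M | p ∣ m}) ∪
      (E.biUnion fun B => {m ∈ M | ∏ p ∈ B, p ∣ m}) ∪ {m ∈ M | t ≤ #{p ∈ Q | p ∣ m}} := by
    intro m hm
    obtain ⟨hmM, hmU⟩ := mem_filter.1 hm
    simp only [mem_union, mem_biUnion, mem_filter]
    rcases h _ hmU (filter_subset _ _) with ⟨p, hpS, hp⟩ | ⟨B, hBE, hB⟩ | ht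
    · exact .inl (.inl ⟨p, hpS, hmM, (mem_filter.1 hp).2⟩)
    · exact .inl (.inr ⟨B, hBE, hmM, prod_primes_dvd m
        (fun p hp => (hP p (mem_filter.1 (hB hp)).1).prime) fun p hp => (mem_filter.1 (hB hp)).2⟩)
    · rw [← filter_mem_eq_inter, filter_filter] at ht
      exact .inr ⟨hmM, ht.trans (card_le_card (by grind))⟩
  refine (card_le_card hsub).trans ((card_union_le _ _).trans ?_)
  refine Nat.add_le_add_right ((card_union_le _ _).trans ?_) _
  exact add_le_add card_biUnion_le card_biUnion_le

theorem card_hits_le_tailCount (hP : ∀ p ∈ P, p.Prime) {t : ℕ} (ht : ∀ A ∈ U, t ≤ #A) :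
    #(hits M P U) ≤ tailCount M P t := by
  simpa using card_hits_le_of_cover (M := M) hP (S := ∅) (E := ∅) (Q := P)
    (fun A hA hAP => .inr (.inr (by rw [inter_eq_left.2 hAP]; exact ht A hA)))

theorem card_hits_le_tailCount_one (hP : ∀ p ∈ P, p.Prime) (h0 : ∅ ∉ U) :
    #(hits M P U) ≤ tailCount M P 1 :=
  card_hits_le_tailCount hP fun _ hA =>
    one_le_card.2 (nonempty_iff_ne_empty.2 fun h => h0 (h ▸ hA))

theorem two_le_card_of_disjoint_minimalPoints (h0 : ∅ ∉ U) {A : Finset ℕ} (hA : A ∈ U)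
    (hAP : A ⊆ P) (hdisj : Disjoint A (minimalPoints P U)) : 2 ≤ #A := by
  by_contra! hlt
  obtain h | h : #A = 0 ∨ #A = 1 := by lia
  · exact h0 (card_eq_zero.1 h ▸ hA)
  · obtain ⟨p, rfl⟩ := card_eq_one.1 h
    exact disjoint_left.1 hdisj (mem_singleton_self p)
      (mem_filter.2 ⟨singleton_subset_iff.1 hAP, hA⟩)

theorem card_hits_le_sum_points_add (hP : ∀ p ∈ P, p.Prime) (h0 : ∅ ∉ U) :
    #(hits M P U) ≤ ∑ p ∈ minimalPoints P U, countMultiples M p +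
      tailCount M (P \ minimalPoints P U) 2 := by
  have := card_hits_le_of_cover (M := M) hP (S := minimalPoints P U) (E := ∅)
    (Q := P \ minimalPoints P U) (t := 2) fun A hA hAP => by
      by_cases hdisj : Disjoint A (minimalPoints P U)
      · refine .inr (.inr ?_)
        rw [inter_eq_left.2 (subset_sdiff.2 ⟨hAP, hdisj⟩)]
        exact two_le_card_of_disjoint_minimalPoints h0 hA hAP hdisj
      · exact .inl ((not_disjoint_iff.1 hdisj).imp fun _ => And.symm)
  simpa using this

theorem card_hits_le_sum_points_add_sum_pairs_add (hP : ∀ p ∈ P, p.Prime) (h0 : ∅ ∉ U) :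
    #(hits M P U) ≤ ∑ p ∈ minimalPoints P U, countMultiples M p +
      ∑ B ∈ minimalPairs P U, countMultiples M (∏ p ∈ B, p) +
        tailCount M (P \ minimalPoints P U) 3 := by
  refine card_hits_le_of_cover hP fun A hA hAP => ?_
  by_cases hdisj : Disjoint A (minimalPoints P U)
  · right
    rw [inter_eq_left.2 (subset_sdiff.2 ⟨hAP, hdisj⟩)]
    have h2 := two_le_card_of_disjoint_minimalPoints h0 hA hAP hdisj
    by_cases h3 : #A = 2
    · exact .inl ⟨A, mem_minimalPairs.2 ⟨⟨hAP, hdisj, h3⟩, hA⟩, subset_rfl⟩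
    · exact .inr (by lia)
  · exact .inl ((not_disjoint_iff.1 hdisj).imp fun _ => And.symm)

end Hits

section Hall

variable {M P : Finset ℕ} {U : Finset (Finset ℕ)} {α : ℕ}

theorem odd_and_three_le_of_prime (hP : ∀ p ∈ P, p.Prime ∧ Odd p) :
    ∀ p ∈ P, Odd p ∧ 3 ≤ p := fun p hp => by
  obtain ⟨hprime, hodd⟩ := hP p hp
  have := hprime.two_le
  grind

theorem IsUpperFamily.two_pow_mul_le_of_minimal (hU : IsUpperFamily P U) {s e : ℕ}
    (hs : s ≤ #(minimalPoints P U)) (he : e ≤ #(minimalPairs P U)) :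
    2 ^ (s + e + 1) * 2 ^ #P ≤ 2 ^ (s + e + 1) * #U + 2 ^ #P * (2 ^ e + 1) :=
  hU.two_pow_mul_two_pow_card_le (fun _ hp => (mem_filter.1 hp).2)
    (fun _ hB => have ⟨⟨_, hdisj, h2⟩, hBU⟩ := mem_minimalPairs.1 hB; ⟨hBU, hdisj, h2⟩) hs he

theorem EvenlySpread.sum_minimalPoints_le {N : ℕ} (hM : EvenlySpread M N α)
    (hP : ∀ p ∈ P, p.Prime ∧ Odd p) :
    ∑ p ∈ minimalPoints P U, countMultiples M p ≤
      ∑ i ∈ range #(minimalPoints P U), (2 * N + (3 + 2 * i)) / (2 * (3 + 2 * i)) :=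
  hM.sum_countMultiples_le (by decide) fun p hp =>
    odd_and_three_le_of_prime hP p (minimalPoints_subset hp)

theorem EvenlySpread.sum_minimalPairs_le {N : ℕ} (hM : EvenlySpread M N α)
    (hP : ∀ p ∈ P, p.Prime ∧ Odd p) :
    ∑ B ∈ minimalPairs P U, countMultiples M (∏ p ∈ B, p) ≤
      #(minimalPairs P U) * ((2 * N + 15) / (2 * 15)) := by
  rw [← smul_eq_mul]
  refine sum_le_card_nsmul _ _ _ fun B hB => ?_
  obtain ⟨⟨hBP, -, h2⟩, -⟩ := mem_minimalPairs.1 hB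
  exact hM.countMultiples_prod_le (fun p hp => odd_and_three_le_of_prime hP p (hBP hp))
    (by decide) (by simp [h2, prod_range_succ])

theorem EvenlySpread.tailCount_sdiff_le_or_sum_minimalPoints_le
    (hM : EvenlySpread M (2 ^ #P) α) (hP : ∀ p ∈ P, p.Prime ∧ Odd p) (hcard : #P ≤ 44) :
    (1000 * tailCount M (P \ minimalPoints P U) 2 ≤ 308 * 2 ^ #P ∧
        1000 * tailCount M (P \ minimalPoints P U) 3 ≤ 150 * 2 ^ #P) ∨
      ∑ p ∈ minimalPoints P U, countMultiples M p ≤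
        ∑ i ∈ range #(minimalPoints P U),
          (2 * 2 ^ #P + (5 + 2 * i)) / (2 * (5 + 2 * i)) := by
  by_cases h3 : 3 ∈ minimalPoints P U
  · have hsub : P \ minimalPoints P U ⊆ P.erase 3 := by grind
    have h3P := minimalPoints_subset h3
    exact .inl ⟨(Nat.mul_le_mul_left _ (tailCount_mono hsub 2)).trans
        (hM.tailCount_erase_three_two_le hP hcard h3P),
      (Nat.mul_le_mul_left _ (tailCount_mono hsub 3)).trans
        (hM.tailCount_erase_three_three_le hP hcard h3P)⟩
  · refine .inr (hM.sum_countMultiples_le (by decide) fun p hp => ?_)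
    have := odd_and_three_le_of_prime hP p (minimalPoints_subset hp)
    grind

theorem EvenlySpread.tailCount_sdiff_two_le (hM : EvenlySpread M (2 ^ #P) α)
    (hP : ∀ p ∈ P, p.Prime ∧ Odd p) (hcard : #P ≤ 44) (S : Finset ℕ) :
    64 * tailCount M (P \ S) 2 ≤ 31 * 2 ^ #P :=
  (Nat.mul_le_mul_left _ (tailCount_mono sdiff_subset 2)).trans (hM.tailCount_two_le hP hcard)

theorem EvenlySpread.tailCount_sdiff_three_le (hM : EvenlySpread M (2 ^ #P) α)
    (hP : ∀ p ∈ P, p.Prime ∧ Odd p) (hcard : #P ≤ 44) (S : Finset ℕ) :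
    1000 * tailCount M (P \ S) 3 ≤ 182 * 2 ^ #P :=
  (Nat.mul_le_mul_left _ (tailCount_mono sdiff_subset 3)).trans
    (hM.tailCount_three_le hP hcard)

theorem card_hits_le_of_four_le_points (hM : EvenlySpread M (2 ^ #P) α)
    (hP : ∀ p ∈ P, p.Prime ∧ Odd p) (hcard : #P ≤ 44) (hU : IsUpperFamily P U) (h0 : ∅ ∉ U)
    (hs : 4 ≤ #(minimalPoints P U)) : #(hits M P U) ≤ #U := by
  have hlow := hU.two_pow_mul_le_of_minimal hs (Nat.zero_le _)
  have hhits := card_hits_le_tailCount_one (M := M) (fun p hp => (hP p hp).1) h0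
  have htail := hM.tailCount_one_le hP hcard
  lia

theorem card_hits_le_of_three_points (hM : EvenlySpread M (2 ^ #P) α)
    (hP : ∀ p ∈ P, p.Prime ∧ Odd p) (hcard : #P ≤ 44) (hU : IsUpperFamily P U) (h0 : ∅ ∉ U)
    (hs : #(minimalPoints P U) = 3) : #(hits M P U) ≤ #U := by
  have hprime := fun p hp => (hP p hp).1
  obtain he | he := (#(minimalPairs P U)).eq_zero_or_pos
  · have hlow := hU.two_pow_mul_le_of_minimal hs.ge (Nat.zero_le _)
    have hhits := card_hits_le_sum_points_add_sum_pairs_add (M := M) hprime h0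
    have hpoints := hM.sum_minimalPoints_le (U := U) hP
    have htail := hM.tailCount_sdiff_three_le hP hcard (minimalPoints P U)
    have hcard_ge : 3 ≤ #P := hs ▸ card_le_card minimalPoints_subset
    -- Only from `2 ^ #P = 128` on do the bounds below leave room for the rounding errors.
    have hN : 2 ^ #P = 8 ∨ 2 ^ #P = 16 ∨ 2 ^ #P = 32 ∨ 2 ^ #P = 64 ∨ 128 ≤ 2 ^ #P := by
      obtain hlt | hge := lt_or_ge #P 7
      · interval_cases #P <;> simp
      · exact .inr (.inr (.inr (.inr (Nat.pow_le_pow_right two_pos hge))))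
    rw [card_eq_zero.1 he, sum_empty] at hhits
    simp only [hs, sum_range_succ, sum_range_zero] at hpoints
    generalize 2 ^ #P = N at *
    omega
  · have hlow := hU.two_pow_mul_le_of_minimal hs.ge he
    have hhits := card_hits_le_tailCount_one (M := M) hprime h0
    have htail := hM.tailCount_one_le hP hcard
    lia

theorem card_hits_le_of_two_points (hM : EvenlySpread M (2 ^ #P) α)
    (hP : ∀ p ∈ P, p.Prime ∧ Odd p) (hcard : #P ≤ 44) (hU : IsUpperFamily P U) (h0 : ∅ ∉ U)
    (hs : #(minimalPoints P U) = 2) : #(hits M P U) ≤ #U := by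
  have hprime := fun p hp => (hP p hp).1
  have hhits₂ := card_hits_le_sum_points_add (M := M) hprime h0
  have hhits₃ := card_hits_le_sum_points_add_sum_pairs_add (M := M) hprime h0
  have hpoints := hM.sum_minimalPoints_le (U := U) hP
  have hpairs := hM.sum_minimalPairs_le (U := U) hP
  have htail₂ := hM.tailCount_sdiff_two_le hP hcard (minimalPoints P U)
  have htail₃ := hM.tailCount_sdiff_three_le hP hcard (minimalPoints P U)
  have hpoints_or := hM.tailCount_sdiff_le_or_sum_minimalPoints_le (U := U) hP hcard
  simp only [hs, sum_range_succ, sum_range_zero] at hpoints hpoints_or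
  obtain he | he | he : #(minimalPairs P U) = 0 ∨ #(minimalPairs P U) = 1 ∨
    2 ≤ #(minimalPairs P U) := by lia
  · have hlow := hU.two_pow_mul_le_of_minimal hs.ge he.ge
    rw [he] at hpairs
    generalize 2 ^ #P = N at *
    omega
  · have hlow := hU.two_pow_mul_le_of_minimal hs.ge he.ge
    rw [he] at hpairs
    generalize 2 ^ #P = N at *
    omega
  · have hlow := hU.two_pow_mul_le_of_minimal hs.ge he
    clear hpairs hhits₃
    generalize 2 ^ #P = N at *
    omega

theorem card_hits_le_of_one_point (hM : EvenlySpread M (2 ^ #P) α)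
    (hP : ∀ p ∈ P, p.Prime ∧ Odd p) (hcard : #P ≤ 44) (hU : IsUpperFamily P U) (h0 : ∅ ∉ U)
    (hs : #(minimalPoints P U) = 1) : #(hits M P U) ≤ #U := by
  have hprime := fun p hp => (hP p hp).1
  have hhits₂ := card_hits_le_sum_points_add (M := M) hprime h0
  have hhits₃ := card_hits_le_sum_points_add_sum_pairs_add (M := M) hprime h0
  have hpoints := hM.sum_minimalPoints_le (U := U) hP
  have hpairs := hM.sum_minimalPairs_le (U := U) hP
  have htail₂ := hM.tailCount_sdiff_two_le hP hcard (minimalPoints P U)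
  have htail₃ := hM.tailCount_sdiff_three_le hP hcard (minimalPoints P U)
  have hpoints_or := hM.tailCount_sdiff_le_or_sum_minimalPoints_le (U := U) hP hcard
  simp only [hs, sum_range_succ, sum_range_zero] at hpoints hpoints_or
  obtain he | he | he : #(minimalPairs P U) = 0 ∨ #(minimalPairs P U) = 1 ∨
    2 ≤ #(minimalPairs P U) := by lia
  · have hlow := hU.two_pow_mul_le_of_minimal hs.ge he.ge
    rw [he] at hpairs
    generalize 2 ^ #P = N at *
    omega
  · have hlow := hU.two_pow_mul_le_of_minimal hs.ge he.ge
    rw [he] at hpairs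
    generalize 2 ^ #P = N at *
    omega
  · have hlow := hU.two_pow_mul_le_of_minimal hs.ge he
    clear hpairs hhits₃
    generalize 2 ^ #P = N at *
    omega

theorem card_hits_le_of_no_points_of_pairs (hM : EvenlySpread M (2 ^ #P) α)
    (hP : ∀ p ∈ P, p.Prime ∧ Odd p) (hcard : #P ≤ 44) (hU : IsUpperFamily P U) (h0 : ∅ ∉ U)
    (hs : #(minimalPoints P U) = 0) (he : 0 < #(minimalPairs P U)) :
    #(hits M P U) ≤ #U := by
  have hprime := fun p hp => (hP p hp).1
  have hhits₂ := card_hits_le_sum_points_add (M := M) hprime h0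
  have hhits₃ := card_hits_le_sum_points_add_sum_pairs_add (M := M) hprime h0
  have hpoints : ∑ p ∈ minimalPoints P U, countMultiples M p = 0 := by
    rw [card_eq_zero.1 hs, sum_empty]
  have hpairs := hM.sum_minimalPairs_le (U := U) hP
  have htail₂ := hM.tailCount_sdiff_two_le hP hcard (minimalPoints P U)
  have htail₃ := hM.tailCount_sdiff_three_le hP hcard (minimalPoints P U)
  obtain h5 | h5 := le_or_gt 5 #(minimalPairs P U)
  · have hlow := hU.two_pow_mul_le_of_minimal hs.ge h5
    clear hpairs hhits₃
    generalize 2 ^ #P = N at *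
    omega
  · have hlow := hU.two_pow_mul_le_of_minimal hs.ge le_rfl
    generalize 2 ^ #P = N at *
    generalize #(minimalPairs P U) = e at *
    interval_cases e <;> omega

theorem card_hits_le_of_unique_triple (hM : EvenlySpread M (2 ^ #P) α)
    (hP : ∀ p ∈ P, p.Prime ∧ Odd p) (hcard : #P ≤ 44) (hU : IsUpperFamily P U)
    {A : Finset ℕ} (hA : A ∈ U) (hA3 : #A = 3) (huniq : ∀ B ∈ U, B = A ∨ 4 ≤ #B) :
    #(hits M P U) ≤ #U := by
  have hlow := hU.two_pow_card_le_of_mem hA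
  have hhits := card_hits_le_of_cover (M := M) (U := U) (fun p hp => (hP p hp).1)
    (S := ∅) (E := {A}) (Q := P) (t := 4) fun B hB hBP =>
      .inr ((huniq B hB).imp (fun h => ⟨A, mem_singleton_self A, h.ge⟩)
        fun h => by rwa [inter_eq_left.2 hBP])
  have hmultiples : countMultiples M (∏ p ∈ A, p) ≤ (2 * 2 ^ #P + 105) / (2 * 105) :=
    hM.countMultiples_prod_le (fun p hp => odd_and_three_le_of_prime hP p (hU.subset A hA hp))
      (by decide) (by simp [hA3, prod_range_succ])
  have htail := hM.two_pow_mul_tailCount_le hP hcard le_rfl (by decide)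
  rw [hA3] at hlow
  rw [sum_empty, sum_singleton] at hhits
  generalize 2 ^ #P = N at *
  omega

theorem card_hits_le_of_three_le_card (hM : EvenlySpread M (2 ^ #P) α)
    (hP : ∀ p ∈ P, p.Prime ∧ Odd p) (hcard : #P ≤ 44) (hU : IsUpperFamily P U)
    (h3 : ∀ A ∈ U, 3 ≤ #A) : #(hits M P U) ≤ #U := by
  have hprime := fun p hp => (hP p hp).1
  obtain rfl | hne := U.eq_empty_or_nonempty
  · simp [hits]
  obtain ⟨A, hA, hmin⟩ := exists_min_image U card hne
  obtain hA3 | hA4 := (h3 A hA).eq_or_lt'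
  · by_cases huniq : ∀ B ∈ U, B = A ∨ 4 ≤ #B
    · exact card_hits_le_of_unique_triple hM hP hcard hU hA hA3 huniq
    · push Not at huniq
      obtain ⟨B, hB, hBA, hB4⟩ := huniq
      have hlow := hU.three_mul_two_pow_card_le hA hB hBA.symm hA3
        (le_antisymm (Nat.le_of_lt_succ hB4) (h3 B hB))
      have hhits := card_hits_le_tailCount (M := M) hprime h3
      have htail := hM.tailCount_three_le hP hcard
      lia
  · have hA44 : #A ≤ 44 := (card_le_card (hU.subset A hA)).trans hcard
    refine Nat.le_of_mul_le_mul_left ?_ (Nat.two_pow_pos #A)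
    calc 2 ^ #A * #(hits M P U) ≤ 2 ^ #A * tailCount M P #A :=
          Nat.mul_le_mul_left _ (card_hits_le_tailCount hprime hmin)
      _ ≤ 2 ^ #P := hM.two_pow_mul_tailCount_le hP hcard hA4 hA44
      _ ≤ 2 ^ #A * #U := hU.two_pow_card_le_of_mem hA

theorem three_le_card_of_minimal_eq_empty (hU : IsUpperFamily P U) (h0 : ∅ ∉ U)
    (hs : minimalPoints P U = ∅) (he : minimalPairs P U = ∅) : ∀ A ∈ U, 3 ≤ #A := by
  intro A hA
  have hdisj : Disjoint A (minimalPoints P U) := hs ▸ disjoint_empty_right A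
  refine lt_of_le_of_ne (two_le_card_of_disjoint_minimalPoints h0 hA (hU.subset A hA) hdisj)
    fun h2 => ?_
  exact notMem_empty A (he ▸ mem_minimalPairs.2 ⟨⟨hU.subset A hA, hdisj, h2.symm⟩, hA⟩)

theorem IsUpperFamily.card_hits_le (hU : IsUpperFamily P U) (hM : EvenlySpread M (2 ^ #P) α)
    (hP : ∀ p ∈ P, p.Prime ∧ Odd p) (hcard : #P ≤ 44) : #(hits M P U) ≤ #U := by
  by_cases h0 : ∅ ∈ U
  · calc #(hits M P U) ≤ #M := card_filter_le _ _
      _ = 2 ^ #P := hM.card_eq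
      _ ≤ #U := by simpa using hU.two_pow_card_le_of_mem h0
  obtain hs | hs | hs | hs | hs : 4 ≤ #(minimalPoints P U) ∨ #(minimalPoints P U) = 3 ∨
    #(minimalPoints P U) = 2 ∨ #(minimalPoints P U) = 1 ∨ #(minimalPoints P U) = 0 := by lia
  · exact card_hits_le_of_four_le_points hM hP hcard hU h0 hs
  · exact card_hits_le_of_three_points hM hP hcard hU h0 hs
  · exact card_hits_le_of_two_points hM hP hcard hU h0 hs
  · exact card_hits_le_of_one_point hM hP hcard hU h0 hs
  · obtain he | he := (#(minimalPairs P U)).eq_zero_or_pos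
    · exact card_hits_le_of_three_le_card hM hP hcard hU
        (three_le_card_of_minimal_eq_empty hU h0 (card_eq_zero.1 hs) (card_eq_zero.1 he))
    · exact card_hits_le_of_no_points_of_pairs hM hP hcard hU h0 hs he

end Hall

/-! ### Coprime matchings -/

section Matching

theorem exists_bijOn_of_hall {β γ : Type*} [Nonempty γ] {D : Finset β} {M : Finset γ}
    {r : β → γ → Prop} [∀ x y, Decidable (r x y)] (hcard : #M ≤ #D)
    (hall : ∀ s ⊆ D, #s ≤ #{y ∈ M | ∃ x ∈ s, r x y}) :
    ∃ ψ : β → γ, Set.BijOn ψ D M ∧ ∀ x ∈ D, r x (ψ x) := by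
  classical
  obtain ⟨f, hinj, hf⟩ := (all_card_le_biUnion_card_iff_exists_injective
    fun x : D => {y ∈ M | r x y}).1 fun s => by
      have hs : s.map (.subtype _) ⊆ D := fun x hx => by
        obtain ⟨x, -, rfl⟩ := mem_map.1 hx
        exact x.2
      calc #s = #(s.map (.subtype _)) := (card_map _).symm
        _ ≤ #{y ∈ M | ∃ x ∈ s.map (.subtype _), r x y} := hall _ hs
        _ ≤ _ := card_le_card fun y hy => by
          obtain ⟨hyM, x, hx, hxy⟩ := mem_filter.1 hy
          obtain ⟨x', hx', rfl⟩ := mem_map.1 hx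
          exact mem_biUnion.2 ⟨x', hx', mem_filter.2 ⟨hyM, hxy⟩⟩
  set ψ : β → γ := Function.extend Subtype.val f fun _ => Classical.arbitrary γ
  have hψ : ∀ x (hx : x ∈ D), ψ x = f ⟨x, hx⟩ := fun x hx =>
    Subtype.val_injective.extend_apply f _ ⟨x, hx⟩
  have hmaps : Set.MapsTo ψ D M := fun x hx => by
    rw [hψ x hx]
    exact (mem_filter.1 (hf ⟨x, hx⟩)).1
  have hinjOn : Set.InjOn ψ D := fun x hx y hy hxy => by
    rw [hψ x hx, hψ y hy] at hxy
    exact congrArg Subtype.val (hinj hxy)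
  refine ⟨ψ, ⟨hmaps, hinjOn, surjOn_of_injOn_of_card_le ψ hmaps hinjOn hcard⟩, fun x hx => ?_⟩
  rw [hψ x hx]
  exact (mem_filter.1 (hf ⟨x, hx⟩)).2

/-- There is a bijection from `D` to `M` that maps every number to one coprime to it. -/
def HasCoprimeMatching (D M : Finset ℕ) : Prop :=
  ∃ ψ : ℕ → ℕ, Set.BijOn ψ D M ∧ ∀ d ∈ D, d.Coprime (ψ d)

variable {D D' M M' : Finset ℕ}

theorem HasCoprimeMatching.symm (h : HasCoprimeMatching D M) : HasCoprimeMatching M D := by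
  obtain ⟨ψ, hψ, hcop⟩ := h
  refine ⟨Function.invFunOn ψ D, hψ.symm hψ.invOn_invFunOn.symm, fun m hm => ?_⟩
  obtain ⟨d, hd, rfl⟩ := hψ.surjOn hm
  rw [hψ.invOn_invFunOn.1 hd]
  exact (hcop d hd).symm

theorem HasCoprimeMatching.union (h : HasCoprimeMatching D M) (h' : HasCoprimeMatching D' M')
    (hD : Disjoint D D') (hM : Disjoint M M') : HasCoprimeMatching (D ∪ D') (M ∪ M') := by
  obtain ⟨ψ, hψ, hcop⟩ := h
  obtain ⟨ψ', hψ', hcop'⟩ := h'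
  set φ : ℕ → ℕ := fun d => if d ∈ D then ψ d else ψ' d
  have hφ : Set.EqOn ψ φ D := fun d hd => (if_pos hd).symm
  have hφ' : Set.EqOn ψ' φ D' := fun d hd => (if_neg (disjoint_right.1 hD hd)).symm
  have hbij := hψ.congr hφ
  have hbij' := hψ'.congr hφ'
  refine ⟨φ, ?_, fun d hd => ?_⟩
  · rw [coe_union, coe_union]
    refine hbij.union hbij' ((Set.injOn_union (disjoint_coe.2 hD)).2
      ⟨hbij.injOn, hbij'.injOn, fun d hd d' hd' heq => ?_⟩)
    exact disjoint_left.1 hM (hbij.mapsTo hd) (heq ▸ hbij'.mapsTo hd')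
  · rcases mem_union.1 hd with hd | hd
    · exact hφ hd ▸ hcop d hd
    · exact hφ' hd ▸ hcop' d hd

theorem HasCoprimeMatching.image_mul_right (h : HasCoprimeMatching D M) {c : ℕ} (hc : 0 < c)
    (hD : ∀ d ∈ D, d.Coprime c) : HasCoprimeMatching D (M.image (c * ·)) := by
  obtain ⟨ψ, hψ, hcop⟩ := h
  refine ⟨fun d => c * ψ d, ?_, fun d hd => (hD d hd).mul_right (hcop d hd)⟩
  rw [coe_image]
  exact (mul_right_injective₀ hc.ne').injOn.bijOn_image.comp hψ

theorem HasCoprimeMatching.image_mul_left (h : HasCoprimeMatching D M) {c : ℕ} (hc : 0 < c)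
    (hM : ∀ m ∈ M, m.Coprime c) : HasCoprimeMatching (D.image (c * ·)) M :=
  (h.symm.image_mul_right hc hM).symm

theorem HasCoprimeMatching.matchable {n N : ℕ}
    (h : HasCoprimeMatching n.divisors (Icc 1 N)) : Matchable n := by
  obtain ⟨ψ, hψ, hcop⟩ := h
  have hN : #n.divisors = N := by simpa using hψ.finsetCard_eq
  exact ⟨ψ, hN ▸ hψ, hcop⟩

end Matching

section SquarefreeDivisors

variable {Q d m : ℕ}

theorem coprime_iff_disjoint_primeFactors_filter (hQ : Q ≠ 0) (hd : d ∣ Q) :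
    d.Coprime m ↔ Disjoint {p ∈ Q.primeFactors | p ∣ m} d.primeFactors := by
  rw [← not_iff_not, Nat.Prime.not_coprime_iff_dvd, not_disjoint_iff]
  have : d ≠ 0 := ne_zero_of_dvd_ne_zero hQ hd
  refine exists_congr fun p => ?_
  rw [mem_filter, Nat.mem_primeFactors, Nat.mem_primeFactors]
  exact ⟨fun ⟨hp, hpd, hpm⟩ => ⟨⟨⟨hp, hpd.trans hd, hQ⟩, hpm⟩, hp, hpd, this⟩,
    fun ⟨⟨_, hpm⟩, hp, hpd, _⟩ => ⟨hp, hpd, hpm⟩⟩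

theorem primeFactors_injOn_divisors (hQ : Squarefree Q) :
    Set.InjOn Nat.primeFactors (Q.divisors : Set ℕ) :=
  Nat.prod_primeFactors_invOn_squarefree.2.injOn.mono fun _ hd =>
    hQ.squarefree_of_dvd (Nat.dvd_of_mem_divisors hd)

theorem card_divisors_of_squarefree (hQ : Squarefree Q) :
    #Q.divisors = 2 ^ #Q.primeFactors := by
  rw [Nat.card_divisors hQ.ne_zero, ← prod_const]
  refine prod_congr rfl fun p hp => congrArg (· + 1) ?_
  exact le_antisymm (hQ.natFactorization_le_one p)
    ((Nat.prime_of_mem_primeFactors hp).factorization_pos_of_dvd hQ.ne_zero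
      (Nat.dvd_of_mem_primeFactors hp))

theorem card_add_card_filter_not_disjoint_primeFactors_le (hQ : Squarefree Q) {s : Finset ℕ}
    (hs : s ⊆ Q.divisors) :
    #s + #{A ∈ Q.primeFactors.powerset | ∀ d ∈ s, ¬ Disjoint A d.primeFactors} ≤
      2 ^ #Q.primeFactors := by
  have hcompl : #s ≤ #{A ∈ Q.primeFactors.powerset | ¬ ∀ d ∈ s, ¬ Disjoint A d.primeFactors} := by
    refine card_le_card_of_injOn (fun d => Q.primeFactors \ d.primeFactors) (fun d hd => ?_) ?_
    · refine mem_coe.2 (mem_filter.2 ⟨mem_powerset.2 sdiff_subset, fun h => ?_⟩)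
      exact h d hd disjoint_sdiff.symm
    · intro d hd d' hd' heq
      have hsub : ∀ d ∈ s, d.primeFactors ⊆ Q.primeFactors := fun d hd =>
        Nat.primeFactors_mono (Nat.dvd_of_mem_divisors (hs hd)) hQ.ne_zero
      refine primeFactors_injOn_divisors hQ (hs hd) (hs hd') ?_
      rw [← Finset.sdiff_sdiff_eq_self (hsub d hd), ← Finset.sdiff_sdiff_eq_self (hsub d' hd')]
      exact congrArg _ heq
  have hsplit := card_filter_add_card_filter_not (s := Q.primeFactors.powerset)
    (fun A => ∀ d ∈ s, ¬ Disjoint A d.primeFactors)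
  rw [card_powerset] at hsplit
  lia

theorem EvenlySpread.card_le_card_filter_exists_coprime {M s : Finset ℕ} {α : ℕ}
    (hQ : Squarefree Q) (hodd : Odd Q) (hcard : #Q.primeFactors ≤ 44)
    (hM : EvenlySpread M (2 ^ #Q.primeFactors) α) (hs : s ⊆ Q.divisors) :
    #s ≤ #{m ∈ M | ∃ d ∈ s, d.Coprime m} := by
  set U := {A ∈ Q.primeFactors.powerset | ∀ d ∈ s, ¬ Disjoint A d.primeFactors}
  have hU : IsUpperFamily Q.primeFactors U :=
    ⟨fun A hA => mem_powerset.1 (mem_filter.1 hA).1, fun A hA B hB hAB =>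
      mem_filter.2 ⟨mem_powerset.2 hB, fun d hd hdisj =>
        (mem_filter.1 hA).2 d hd (disjoint_of_subset_left hAB hdisj)⟩⟩
  have hhits : #(hits M Q.primeFactors U) ≤ #U := hU.card_hits_le hM
    (fun p hp => ⟨Nat.prime_of_mem_primeFactors hp,
      hodd.of_dvd_nat (Nat.dvd_of_mem_primeFactors hp)⟩) hcard
  have hcompl : hits M Q.primeFactors U = {m ∈ M | ¬ ∃ d ∈ s, d.Coprime m} := by
    refine filter_congr fun m _ => ?_
    rw [mem_filter, and_iff_right (mem_powerset.2 (filter_subset _ _))]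
    push Not
    exact forall₂_congr fun d hd => (coprime_iff_disjoint_primeFactors_filter hQ.ne_zero
      (Nat.dvd_of_mem_divisors (hs hd))).not.symm
  have hM_card := card_filter_add_card_filter_not (s := M) (fun m => ∃ d ∈ s, d.Coprime m)
  have hs_card := card_add_card_filter_not_disjoint_primeFactors_le hQ hs
  rw [← hcompl, hM.card_eq] at hM_card
  lia

theorem EvenlySpread.hasCoprimeMatching {M : Finset ℕ} {α : ℕ} (hQ : Squarefree Q)
    (hodd : Odd Q) (hcard : #Q.primeFactors ≤ 44)
    (hM : EvenlySpread M (2 ^ #Q.primeFactors) α) : HasCoprimeMatching Q.divisors M :=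
  exists_bijOn_of_hall (by rw [hM.card_eq, card_divisors_of_squarefree hQ])
    fun _ hs => hM.card_le_card_filter_exists_coprime hQ hodd hcard hs

end SquarefreeDivisors

/-! ### Initial segments and odd numbers -/

section IntervalsAndParity

theorem countMultiples_Icc (N d : ℕ) : countMultiples (Icc 1 N) d = N / d :=
  Nat.Ioc_filter_dvd_card_eq_div N d

theorem evenlySpread_Icc (N : ℕ) : EvenlySpread (Icc 1 N) N 0 := by
  refine ⟨by simp, zero_le_one, fun d _ => ?_, fun d hd => ?_, fun d _ => ?_⟩ <;>
    rw [countMultiples_Icc]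
  · have := Nat.mul_div_le N d
    lia
  · have := Nat.lt_mul_div_succ N hd.pos
    lia
  · have := Nat.mul_div_le N d
    lia

theorem countMultiples_filter_odd_add (M : Finset ℕ) {d : ℕ} (hd : Odd d) :
    countMultiples {m ∈ M | Odd m} d + countMultiples M (d * 2) = countMultiples M d := by
  have h := card_filter_add_card_filter_not (s := {m ∈ M | d ∣ m}) (fun m => Odd m)
  rw [countMultiples, countMultiples, countMultiples, ← h, filter_filter, filter_filter,
    filter_filter]
  congr 2
  · grind
  · refine filter_congr fun m _ => ?_
    rw [Nat.not_odd_iff_even, even_iff_two_dvd]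
    exact ⟨fun h => ⟨dvd_of_mul_right_dvd h,
      dvd_of_mul_left_dvd h⟩, fun h => (Nat.coprime_two_right.2 hd).mul_dvd_of_dvd_of_dvd h.1 h.2⟩

theorem evenlySpread_odd (N : ℕ) : EvenlySpread {m ∈ Icc 1 (2 * N) | Odd m} N 1 := by
  have hcount : ∀ d, Odd d →
      countMultiples {m ∈ Icc 1 (2 * N) | Odd m} d = (2 * N / d + 1) / 2 := fun d hd => by
    have h := countMultiples_filter_odd_add (Icc 1 (2 * N)) hd
    rw [countMultiples_Icc, countMultiples_Icc, ← Nat.div_div_eq_div_mul] at h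
    lia
  refine ⟨?_, le_rfl, fun d hd => ?_, fun d hd => ?_, fun d hd => ?_⟩
  · have h := hcount 1 odd_one
    simp only [countMultiples, one_dvd, filter_true, Nat.div_one] at h
    lia
  all_goals
    rw [hcount d hd]
    have := Nat.mul_div_le (2 * N) d
    have := Nat.lt_mul_div_succ (2 * N) hd.pos
  · nlinarith [Nat.div_mul_le_self (2 * N / d + 1) 2]
  · have : 2 * N / d ≤ 2 * ((2 * N / d + 1) / 2) := by lia
    nlinarith [Nat.mul_le_mul_left d this]
  · have : (2 * N / d + 1) / 2 ≤ 2 * N / d := by lia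
    exact (Nat.mul_le_mul_left d this).trans (Nat.mul_div_le _ _)

theorem divisors_two_mul_eq_union (Q : ℕ) :
    (2 * Q).divisors = Q.divisors ∪ Q.divisors.image (2 * ·) := by
  rw [Nat.divisors_mul, Nat.prime_two.divisors, insert_eq, union_mul, Finset.singleton_mul,
    Finset.singleton_mul]
  change Q.divisors.image (1 * ·) ∪ _ = _
  simp only [one_mul, image_id']
  rfl

theorem image_two_mul_Icc_union_filter_odd (N : ℕ) :
    (Icc 1 N).image (2 * ·) ∪ {m ∈ Icc 1 (2 * N) | Odd m} = Icc 1 (2 * N) := by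
  ext m
  simp only [mem_union, mem_image, mem_filter, mem_Icc]
  constructor
  · rintro (⟨a, ha, rfl⟩ | hm) <;> lia
  · intro hm
    rcases m.even_or_odd' with ⟨a, rfl | rfl⟩
    · exact .inl ⟨a, by lia, rfl⟩
    · exact .inr ⟨hm, odd_two_mul_add_one a⟩

theorem disjoint_image_two_mul_of_odd {s t : Finset ℕ} (ht : ∀ x ∈ t, Odd x) :
    Disjoint (s.image (2 * ·)) t := by
  refine disjoint_left.2 fun x hx hxt => Nat.not_even_iff_odd.2 (ht x hxt) ?_
  obtain ⟨y, -, rfl⟩ := mem_image.1 hx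
  exact even_two_mul y

theorem HasCoprimeMatching.divisors_two_mul {Q N : ℕ} (hQ : Odd Q)
    (h : HasCoprimeMatching Q.divisors (Icc 1 N))
    (hodd : HasCoprimeMatching Q.divisors {m ∈ Icc 1 (2 * N) | Odd m}) :
    HasCoprimeMatching (2 * Q).divisors (Icc 1 (2 * N)) := by
  have hdivisors : ∀ d ∈ Q.divisors, Odd d := fun d hd =>
    hQ.of_dvd_nat (Nat.dvd_of_mem_divisors hd)
  have hfilter : ∀ m ∈ {m ∈ Icc 1 (2 * N) | Odd m}, Odd m := fun m hm => (mem_filter.1 hm).2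
  rw [divisors_two_mul_eq_union, ← image_two_mul_Icc_union_filter_odd]
  exact (h.image_mul_right two_pos fun d hd => Nat.coprime_two_right.2 (hdivisors d hd)).union
    (hodd.image_mul_left two_pos fun m hm => Nat.coprime_two_right.2 (hfilter m hm))
    (disjoint_image_two_mul_of_odd hdivisors).symm (disjoint_image_two_mul_of_odd hfilter)

end IntervalsAndParity

theorem stmt_7 (n : ℕ) (hn : 0 < n) (hsf : Squarefree n)
    (hω : n.primeFactors.card ≤ 44) : Matchable n := by
  rcases n.even_or_odd with heven | hodd
  · obtain ⟨Q, rfl⟩ := heven.two_dvd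
    have hodd : Odd Q := Nat.coprime_two_left.1 (Nat.coprime_of_squarefree_mul hsf)
    have hQ : Squarefree Q := hsf.of_mul_right
    have hcard : #Q.primeFactors ≤ 44 :=
      (card_le_card (Nat.primeFactors_mono (Dvd.intro_left 2 rfl) hn.ne')).trans hω
    exact (((evenlySpread_Icc _).hasCoprimeMatching hQ hodd hcard).divisors_two_mul hodd
      ((evenlySpread_odd _).hasCoprimeMatching hQ hodd hcard)).matchable
  · exact ((evenlySpread_Icc _).hasCoprimeMatching hsf hodd hω).matchable
end

section
/- Every squarefree positive integer is matchable. -/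
open Finset Function

section Determinants

variable {ι R : Type*} [CommRing R]

lemma prod_eq_sum_powerset_neg_one_pow_mul_prod_one_sub (x : ι → R) (s : Finset ι) :
    ∏ i ∈ s, x i = ∑ t ∈ s.powerset, (-1) ^ #t * ∏ i ∈ t, (1 - x i) := by
  simp_rw [← prod_neg, ← prod_one_add, neg_sub, add_sub_cancel]

variable [Fintype ι]

lemma exists_perm_forall_apply_ne_zero_of_det_ne_zero [DecidableEq ι] {A : Matrix ι ι R}
    (hA : A.det ≠ 0) : ∃ σ : Equiv.Perm ι, ∀ i, A i (σ i) ≠ 0 := by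
  rw [← Matrix.det_transpose, Matrix.det_apply] at hA
  obtain ⟨σ, -, hσ⟩ := exists_ne_zero_of_sum_ne_zero hA
  refine ⟨σ, fun i hi => hσ ?_⟩
  rw [prod_eq_zero (mem_univ i) hi, smul_zero]

lemma det_pow_add_ne_zero [DecidableEq ι] [IsDomain R] {k : ℕ} (e : ι ≃ Fin k)
    {y : ι → R} (hy : Injective y) (hy₀ : ∀ i, y i ≠ 0) (a : ℕ) :
    (Matrix.of fun i j => y i ^ (a + e j)).det ≠ 0 := by
  have hfactor : (Matrix.of fun i j => y i ^ (a + e j)) =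
      Matrix.diagonal (fun i => y i ^ a) *
        (Matrix.vandermonde (y ∘ e.symm)).submatrix e e := by
    ext i j
    simp [Matrix.diagonal_mul, Matrix.vandermonde_apply, pow_add]
  rw [hfactor, Matrix.det_mul, Matrix.det_diagonal, Matrix.det_submatrix_equiv_self]
  exact mul_ne_zero (prod_ne_zero_iff.mpr fun i _ => pow_ne_zero a (hy₀ i))
    (Matrix.det_vandermonde_ne_zero_iff.mpr (hy.comp e.symm.injective))

lemma det_prod_one_sub_pow_ne_zero [DecidableEq ι] [IsDomain R] {k : ℕ}
    (e : Finset ι ≃ Fin k) {x : ι → R} (hx₀ : ∀ i, x i ≠ 0)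
    (hx : Injective fun s : Finset ι => ∏ i ∈ s, x i) (a : ℕ) :
    (Matrix.of fun s t : Finset ι => ∏ i ∈ s, (1 - x i ^ (a + e t))).det ≠ 0 := by
  let U : Matrix (Finset ι) (Finset ι) R := Matrix.of fun s t => if t ⊆ s then (-1) ^ #t else 0
  have hfactor : (Matrix.of fun s t : Finset ι => (∏ i ∈ s, x i) ^ (a + e t)) =
      U * Matrix.of fun s t : Finset ι => ∏ i ∈ s, (1 - x i ^ (a + e t)) := by
    ext s t
    simp only [U, Matrix.mul_apply, Matrix.of_apply, ite_mul, zero_mul, ← sum_filter,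
      filter_subset_univ, ← prod_pow]
    exact prod_eq_sum_powerset_neg_one_pow_mul_prod_one_sub (fun i => x i ^ (a + e t)) s
  have hdet := det_pow_add_ne_zero e hx (fun s => prod_ne_zero_iff.mpr fun i _ => hx₀ i) a
  rw [hfactor, Matrix.det_mul] at hdet
  exact right_ne_zero_of_mul hdet

lemma exists_equiv_fin_forall_pow_ne_one [IsDomain R] {x : ι → R} (hx₀ : ∀ i, x i ≠ 0)
    (hx : Injective fun s : Finset ι => ∏ i ∈ s, x i) (a : ℕ) :
    ∃ e : Finset ι ≃ Fin (2 ^ Fintype.card ι), ∀ s, ∀ i ∈ s, x i ^ (a + e s) ≠ 1 := by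
  classical
  let e := Fintype.equivFinOfCardEq (Fintype.card_finset (α := ι))
  obtain ⟨σ, hσ⟩ :=
    exists_perm_forall_apply_ne_zero_of_det_ne_zero (det_prod_one_sub_pow_ne_zero e hx₀ hx a)
  exact ⟨σ.trans e, fun s i hi h => prod_ne_zero_iff.mp (hσ s) i hi (sub_eq_zero.mpr h.symm)⟩

end Determinants

section CoprimeOrders

variable {ι M : Type*} [CommMonoid M] {x : ι → M}

-- Raising to the product of the orders of the other `x j` isolates the factor `x i`.
lemma mem_iff_prod_pow_prod_erase_orderOf_ne_one [DecidableEq ι]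
    (hx : Pairwise (Nat.Coprime on fun i => orderOf (x i))) (hx₁ : ∀ i, x i ≠ 1)
    {s u : Finset ι} (hsu : s ⊆ u) (i : ι) :
    i ∈ s ↔ (∏ j ∈ s, x j) ^ (∏ j ∈ u.erase i, orderOf (x j)) ≠ 1 := by
  set N := ∏ j ∈ u.erase i, orderOf (x j)
  have hother {j : ι} (hj : j ∈ s) (hji : j ≠ i) : x j ^ N = 1 :=
    orderOf_dvd_iff_pow_eq_one.mp (dvd_prod_of_mem _ (mem_erase.mpr ⟨hji, hsu hj⟩))
  have hcop : (orderOf (x i)).Coprime N :=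
    Nat.Coprime.prod_right fun j hj => hx (ne_of_mem_erase hj).symm
  have hself : x i ^ N ≠ 1 := fun h =>
    hx₁ i (orderOf_eq_one_iff.mp (hcop.eq_one_of_dvd (orderOf_dvd_of_pow_eq_one h)))
  rw [← prod_pow]
  refine ⟨fun hi => ?_, fun h => ?_⟩
  · rwa [prod_eq_single_of_mem i hi fun j hj hji => hother hj hji]
  · by_contra hi
    exact h (prod_eq_one fun j hj => hother hj (ne_of_mem_of_not_mem hj hi))

lemma injective_prod_of_pairwise_coprime_orderOf
    (hx : Pairwise (Nat.Coprime on fun i => orderOf (x i))) (hx₁ : ∀ i, x i ≠ 1) :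
    Injective fun s : Finset ι => ∏ i ∈ s, x i := by
  classical
  intro s t (hst : ∏ i ∈ s, x i = ∏ i ∈ t, x i)
  ext i
  rw [mem_iff_prod_pow_prod_erase_orderOf_ne_one hx hx₁ (subset_union_left (s₂ := t)),
    mem_iff_prod_pow_prod_erase_orderOf_ne_one hx hx₁ (subset_union_right (s₁ := s)), hst]

end CoprimeOrders

theorem exists_equiv_fin_forall_not_dvd {ι : Type*} [Fintype ι] {q : ι → ℕ}
    (hq : Pairwise (Nat.Coprime on q)) (hq₁ : ∀ i, 1 < q i) (a : ℕ) :
    ∃ e : Finset ι ≃ Fin (2 ^ Fintype.card ι), ∀ s, ∀ i ∈ s, ¬ q i ∣ a + e s := by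
  let x (i : ι) : ℂ := Complex.exp (2 * Real.pi * Complex.I / q i)
  have hx (i : ι) : IsPrimitiveRoot (x i) (q i) :=
    Complex.isPrimitiveRoot_exp (q i) (Nat.ne_zero_of_lt (hq₁ i))
  have hinj : Injective fun s : Finset ι => ∏ i ∈ s, x i :=
    injective_prod_of_pairwise_coprime_orderOf
      (by simpa only [← (hx _).eq_orderOf] using hq) fun i => (hx i).ne_one (hq₁ i)
  obtain ⟨e, he⟩ := exists_equiv_fin_forall_pow_ne_one (fun i => Complex.exp_ne_zero _) hinj a
  exact ⟨e, fun s i hi hdvd => he s i hi (((hx i).pow_eq_one_iff_dvd _).mpr hdvd)⟩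

lemma card_divisors_of_squarefree_s8 {n : ℕ} (hn : Squarefree n) :
    #n.divisors = 2 ^ #n.primeFactors := by
  rw [Nat.card_divisors hn.ne_zero]
  refine prod_eq_pow_card fun p hp => congrArg (· + 1) ?_
  exact Nat.factorization_eq_one_of_squarefree hn (Nat.prime_of_mem_primeFactors hp)
    (Nat.dvd_of_mem_primeFactors hp)

lemma injOn_filter_dvd_divisors {n : ℕ} (hn : Squarefree n) :
    Set.InjOn (fun d => ({p | p.1 ∣ d} : Finset n.primeFactors)) n.divisors := by
  intro d hd e he hde
  have hdn := Nat.dvd_of_mem_divisors hd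
  have hen := Nat.dvd_of_mem_divisors he
  refine (Nat.Squarefree.ext_iff (hn.squarefree_of_dvd hdn) (hn.squarefree_of_dvd hen)).mpr
    fun p hp => ?_
  by_cases hpn : p ∣ n
  · simpa only [mem_filter_univ] using
      Finset.ext_iff.mp hde ⟨p, hp.mem_primeFactors hpn hn.ne_zero⟩
  · exact iff_of_false (fun h => hpn (h.trans hdn)) (fun h => hpn (h.trans hen))

theorem stmt_8_general {n : ℕ} (hn : Squarefree n) (a : ℕ) :
    ∃ ψ : ℕ → ℕ, Set.BijOn ψ ↑n.divisors ↑(Ico a (a + #n.divisors)) ∧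
      ∀ d ∈ n.divisors, Nat.gcd d (ψ d) = 1 := by
  have hcoprime : Pairwise (Nat.Coprime on fun p : n.primeFactors => p.1) := fun p q hpq =>
    (Nat.coprime_primes (Nat.prime_of_mem_primeFactors p.2)
      (Nat.prime_of_mem_primeFactors q.2)).mpr (Subtype.coe_ne_coe.mpr hpq)
  obtain ⟨e, he⟩ := exists_equiv_fin_forall_not_dvd hcoprime
    (fun p => (Nat.prime_of_mem_primeFactors p.2).one_lt) a
  let ψ (d : ℕ) : ℕ := a + e {p : n.primeFactors | p.1 ∣ d}
  have hmaps : Set.MapsTo ψ n.divisors (Ico a (a + #n.divisors)) := fun d _ => by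
    rw [card_divisors_of_squarefree_s8 hn, ← Fintype.card_coe, mem_coe, mem_Ico]
    exact ⟨Nat.le_add_right _ _, Nat.add_lt_add_left (e _).isLt a⟩
  have hinj : Set.InjOn ψ n.divisors :=
    ((add_right_injective a).comp (Fin.val_injective.comp e.injective)).comp_injOn
      (injOn_filter_dvd_divisors hn)
  refine ⟨ψ, ⟨hmaps, hinj, surjOn_of_injOn_of_card_le ψ hmaps hinj (by simp)⟩, fun d hd => ?_⟩
  refine Nat.coprime_of_dvd fun p hp hpd hpψ => ?_
  have hpn : p ∈ n.primeFactors :=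
    hp.mem_primeFactors (hpd.trans (Nat.dvd_of_mem_divisors hd)) hn.ne_zero
  exact he _ ⟨p, hpn⟩ (by simpa using hpd) hpψ

theorem stmt_8 (n : ℕ) (hn : 0 < n) (hsf : Squarefree n) : Matchable n := by
  simpa only [Matchable, add_comm 1, Ico_add_one_right_eq_Icc] using stmt_8_general hsf 1
end

section
/- Let ℓ be a positive integer with ℓ ≤ 44 and let u be a product of ℓ distinct odd primes. Then there exists a coprime matching from D(u) to the set of odd integers in [1, 2^{ℓ+1}]. -/
/-!
Attach to an odd `m ≤ 2 ^ (ℓ + 1)` its pattern, the set of prime factors of `u` dividing `m`. A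
divisor `d` of `u` is coprime to `m` exactly when the prime factors of `d` avoid the pattern of `m`.
By Hall's theorem a matching exists as soon as every family of sets of prime factors of `u` that is
closed under subsets contains the pattern of a uniform `m` with at least the probability with which
it contains a uniform random set. In other words, the random pattern should be stochastically
dominated by a uniform random subset.

For that it suffices to reveal the primes in increasing order and to check that, given which primes
below `p` divide `m`, the prime `p` divides `m` with probability at most `1 / 2`. For `p ≤ 11` there
are explicit injections from multiples to non-multiples. For `p ≥ 13`, write `m = k * p ^ a * b`,
where `b` is the largest prime factor exceeding `p` (or `1`), and compare the numbers with the same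
`k`. The non-multiples of `p` up to `x` correspond to the `b ≤ x / k`, the multiples to the
`b ≤ x / (k * p ^ a)` with `a ≥ 1`. Since `2 * π w ≤ π (13 * w)` by Chebyshev's bounds, each
division by `p` at least halves the number of possible `b`, and `1 / 2 + 1 / 4 + ⋯ ≤ 1`.
-/

/-- A coprime matching from a finite set `A` of positive integers to a finite set `B`
is a bijection `ψ : A → B` with `gcd(a, ψ(a)) = 1` for every `a ∈ A`. -/
def CoprimeMatching (A B : Finset ℕ) : Prop :=
  ∃ ψ : ℕ → ℕ, Set.BijOn ψ ↑A ↑B ∧ ∀ a ∈ A, Nat.gcd a (ψ a) = 1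

open Finset
open scoped Nat.Prime

/-! ### Doubling of the prime counting function -/

lemma primeCounting_mul_log_le {w : ℕ} (hw : 1 < w) :
    π w * Real.log w ≤ 4 * Real.log 2 * w + √w * Real.log w := by
  have hw' : (1 : ℝ) < w := by exact_mod_cast hw
  have hlog : 0 < Real.log w := Real.log_pos hw'
  have hlog4 : Real.log 4 = 2 * Real.log 2 := by
    rw [show (4 : ℝ) = 2 ^ 2 by norm_num, Real.log_pow, Nat.cast_ofNat]
  have hπ := Chebyshev.pi_le_log4_mul_div hw'
  rw [Nat.floor_natCast, Real.log_sqrt (by positivity), hlog4] at hπ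
  calc π w * Real.log w
      ≤ (2 * Real.log 2 * w / (Real.log w / 2) + √w) * Real.log w := by gcongr
    _ = 4 * Real.log 2 * w + √w * Real.log w := by field_simp; ring

lemma le_primeCounting_of_mul_le {m n : ℕ} {B : ℝ} (hn : n ≠ 0) (hB : Real.log (n + 1) ≤ B)
    (h : (m + 1) * B ≤ n * Real.log 2) : m ≤ π n := by
  have hn' : (0 : ℝ) < n := by positivity
  have hB0 : 0 < B := (Real.log_pos (by linarith)).trans_le hB
  have hlogn : Real.log n ≤ B := (Real.log_le_log hn' (by linarith)).trans hB
  have hmul : (m : ℝ) * B ≤ π n * B := calc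
    m * B ≤ n * Real.log 2 - Real.log (n + 1) := by linarith
    _ ≤ π n * Real.log n := (Chebyshev.psi_ge n).trans (Chebyshev.psi_le_primeCounting_mul_log n)
    _ ≤ π n * B := by gcongr
  exact_mod_cast le_of_mul_le_mul_right hmul hB0

-- The tangent to the logarithm at `√x = 32`.
lemma log_le_sqrt_div_add {x : ℝ} (hx : 0 < x) : Real.log x ≤ √x / 16 + 5 := by
  have htangent : Real.log (√x / 32) ≤ √x / 32 - 1 := Real.log_le_sub_one_of_pos (by positivity)
  have hlog32 : Real.log 32 = 5 * Real.log 2 := by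
    rw [show (32 : ℝ) = 2 ^ 5 by norm_num, Real.log_pow, Nat.cast_ofNat]
  rw [Real.log_div (by positivity) (by norm_num), Real.log_sqrt hx.le, hlog32] at htangent
  linarith [Real.log_two_lt_d9]

lemma two_mul_primeCounting_le_of_large {w : ℕ} (hw : 1024 ≤ w) : 2 * π w ≤ π (13 * w) := by
  have hw' : (1024 : ℝ) ≤ w := by exact_mod_cast hw
  have hw0 : (0 : ℝ) < w := by linarith
  have hsqrt : 32 ≤ √(w : ℝ) := Real.le_sqrt_of_sq_le (by linarith)
  have hsq : √(w : ℝ) ^ 2 = w := Real.sq_sqrt hw0.le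
  have hlog : 10 * Real.log 2 ≤ Real.log w := calc
    10 * Real.log 2 = Real.log (2 ^ 10) := by rw [Real.log_pow, Nat.cast_ofNat]
    _ ≤ Real.log w := Real.log_le_log (by norm_num) (by linarith)
  have hlog13 : Real.log ((13 * w : ℕ) + 1) ≤ 1.4 * Real.log w := calc
    Real.log ((13 * w : ℕ) + 1) ≤ Real.log (2 ^ 4 * w) :=
      Real.log_le_log (by positivity) (by push_cast; linarith)
    _ = 4 * Real.log 2 + Real.log w := by
      rw [Real.log_mul (by norm_num) hw0.ne', Real.log_pow, Nat.cast_ofNat]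
    _ ≤ 1.4 * Real.log w := by linarith
  have hmain : 2.8 * (√w * Real.log w) + 1.4 * Real.log w ≤ 1.8 * (Real.log 2 * w) := calc
    2.8 * (√w * Real.log w) + 1.4 * Real.log w = (2.8 * √w + 1.4) * Real.log w := by ring
    _ ≤ (2.8 * √w + 1.4) * (√w / 16 + 5) := by gcongr; exact log_le_sqrt_div_add hw0
    _ ≤ 1.8 * (0.6931 * √w ^ 2) := by nlinarith
    _ ≤ 1.8 * (Real.log 2 * w) := by
      rw [hsq]; gcongr; linarith [Real.log_two_gt_d9]
  refine le_primeCounting_of_mul_le (by omega) hlog13 ?_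
  push_cast
  linarith [primeCounting_mul_log_le (show 1 < w by omega)]

lemma three_mul_primeCounting_le {w : ℕ} (hw : 6 ≤ w) : 3 * π w ≤ w + 9 := by
  have h := Nat.primeCounting_add_le (a := 6) (k := 6) (by norm_num) le_rfl (w - 6)
  have hπ : π 6 = 3 := by decide
  have hφ : Nat.totient 6 = 2 := by decide
  rw [hπ, hφ, Nat.add_sub_cancel' hw] at h
  omega

lemma two_mul_primeCounting_le_of_mid {w : ℕ} (hw : 28 ≤ w) (hw2 : w ≤ 1024) :
    2 * π w ≤ π (13 * w) := by
  have hw' : (28 : ℝ) ≤ w := by exact_mod_cast hw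
  have hw2' : (w : ℝ) ≤ 1024 := by exact_mod_cast hw2
  have hπ : (3 : ℝ) * π w ≤ w + 9 := by
    exact_mod_cast three_mul_primeCounting_le (show 6 ≤ w by omega)
  have hlog : Real.log ((13 * w : ℕ) + 1) ≤ 14 * Real.log 2 := calc
    Real.log ((13 * w : ℕ) + 1) ≤ Real.log (2 ^ 14) :=
      Real.log_le_log (by positivity) (by push_cast; linarith)
    _ = 14 * Real.log 2 := by rw [Real.log_pow, Nat.cast_ofNat]
  refine le_primeCounting_of_mul_le (by omega) hlog ?_
  rw [← mul_assoc]
  gcongr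
  push_cast
  linarith

lemma two_mul_primeCounting_le (w : ℕ) : 2 * π w ≤ π (13 * w) := by
  have two_mul_le {a b : ℕ} (hab : 2 * π a ≤ π b) (ha : w ≤ a) (hb : b ≤ 13 * w) :
      2 * π w ≤ π (13 * w) :=
    (Nat.mul_le_mul_left 2 (Nat.monotone_primeCounting ha)).trans
      (hab.trans (Nat.monotone_primeCounting hb))
  rcases le_total 1024 w with hlarge | hle
  · exact two_mul_primeCounting_le_of_large hlarge
  rcases le_or_gt 28 w with hmid | hlt
  · exact two_mul_primeCounting_le_of_mid hmid hle
  rcases le_or_gt 5 w with h5 | h4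
  · exact two_mul_le (a := 27) (b := 65) (by decide +kernel) (by omega) (by omega)
  rcases Nat.eq_zero_or_pos w with rfl | hpos
  · simp
  · exact two_mul_le (a := 4) (b := 13) (by decide) (by omega) (by omega)

/-! ### Balanced sets -/

/-- `m` and `m'` are divisible by the same primes below `p`. -/
def SamePattern (p m m' : ℕ) : Prop := ∀ q < p, q.Prime → (q ∣ m ↔ q ∣ m')

instance (p m m' : ℕ) : Decidable (SamePattern p m m') :=
  inferInstanceAs (Decidable (∀ q < p, q.Prime → (q ∣ m ↔ q ∣ m')))

/-- Given which primes below `p` divide an element of `A`, it is divisible by `p` with conditional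
probability at most `1 / 2`. The classes of elements with the same pattern are encoded by weights
`g` that depend on the pattern only. -/
def PatternBalanced (A : Finset ℕ) (p : ℕ) : Prop :=
  ∀ g : ℕ → ℕ, (∀ m m', SamePattern p m m' → g m = g m') →
    ∑ m ∈ A with p ∣ m, g m ≤ ∑ m ∈ A with ¬ p ∣ m, g m

lemma patternBalanced_of_injOn {A : Finset ℕ} {p : ℕ} (φ : ℕ → ℕ)
    (hφ : ∀ m ∈ A, p ∣ m → φ m ∈ A ∧ ¬ p ∣ φ m ∧ SamePattern p m (φ m))
    (hinj : Set.InjOn φ {m ∈ A | p ∣ m}) : PatternBalanced A p := by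
  intro g hg
  calc ∑ m ∈ A with p ∣ m, g m
      = ∑ m ∈ A with p ∣ m, g (φ m) := sum_congr rfl fun m hm =>
        hg _ _ (hφ m (mem_filter.1 hm).1 (mem_filter.1 hm).2).2.2
    _ = ∑ n ∈ {m ∈ A | p ∣ m}.image φ, g n := (sum_image (by simpa using hinj)).symm
    _ ≤ ∑ m ∈ A with ¬ p ∣ m, g m := sum_le_sum_of_subset <| image_subset_iff.2 fun m hm =>
        mem_filter.2 ((hφ m (mem_filter.1 hm).1 (mem_filter.1 hm).2).imp_right And.left)

lemma patternBalanced_of_card_fiber_le {A : Finset ℕ} {p : ℕ} (c : ℕ → ℕ)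
    (hc : ∀ m ∈ A, SamePattern p m (c m))
    (hcard : ∀ k ∈ A.image c, #{m ∈ A | p ∣ m ∧ c m = k} ≤ #{m ∈ A | ¬ p ∣ m ∧ c m = k}) :
    PatternBalanced A p := by
  intro g hg
  have sum_eq (r : ℕ → Prop) [DecidablePred r] :
      ∑ m ∈ A with r m, g m = ∑ k ∈ A.image c, #{m ∈ A | r m ∧ c m = k} * g k := by
    rw [sum_congr rfl fun m hm => hg _ _ (hc m (mem_filter.1 hm).1),
      ← sum_fiberwise_of_maps_to' fun m hm => mem_image_of_mem c (mem_filter.1 hm).1]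
    simp only [sum_const, smul_eq_mul, filter_filter]
  rw [sum_eq, sum_eq]
  exact sum_le_sum fun k hk => Nat.mul_le_mul_right _ (hcard k hk)

lemma samePattern_mul {p k b : ℕ} (hb : ∀ q < p, q.Prime → ¬ q ∣ b) :
    SamePattern p (k * b) k := fun q hqp hq => by
  simp only [hq.dvd_mul, hb q hqp hq, or_false]

lemma SamePattern.odd_iff {p m m' : ℕ} (h : SamePattern p m m') (hp : 2 < p) :
    Odd m ↔ Odd m' := by
  rw [← Nat.not_even_iff_odd, ← Nat.not_even_iff_odd, even_iff_two_dvd, even_iff_two_dvd,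
    h 2 hp Nat.prime_two]

/-- The odd integers in `[1, x]`. -/
abbrev odds (x : ℕ) : Finset ℕ := {m ∈ Icc 1 x | Odd m}

lemma mem_odds {x m : ℕ} : m ∈ odds x ↔ Odd m ∧ m ≤ x := by
  simp only [mem_filter, mem_Icc]
  exact ⟨fun h => ⟨h.2, h.1.2⟩, fun h => ⟨⟨h.1.pos, h.2⟩, h.1⟩⟩

lemma card_odds (n : ℕ) : #(odds (2 * n)) = n := by
  have hodds : odds (2 * n) = (range n).image (2 * · + 1) := by
    ext m
    simp only [mem_odds, mem_image, mem_range]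
    constructor
    · rintro ⟨⟨i, rfl⟩, h⟩
      exact ⟨i, by omega, rfl⟩
    · rintro ⟨i, hi, rfl⟩
      exact ⟨odd_two_mul_add_one i, by omega⟩
  rw [hodds, card_image_of_injective _ fun i j h => by simpa using h, card_range]

/-! ### Primes `p ≤ 11` -/

lemma patternBalanced_odds_of_sub {p M : ℕ} (hp2 : 2 < p) (hpM : ¬ p ∣ M)
    (hM : ∀ q < p, q.Prime → q ∣ M) (ψ : ℕ → ℕ)
    (hψ : ∀ m ∈ odds M, p ∣ m →
      ψ m ≤ m ∧ ¬ p ∣ ψ m ∧ ¬ p ∣ ψ m + M ∧ SamePattern p m (ψ m))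
    (hinj : ∀ m ∈ odds M, p ∣ m → ∀ n ∈ odds M, p ∣ n → ψ m = ψ n → m = n) (x : ℕ) :
    PatternBalanced (odds x) p := by
  have mem_odds_self {m : ℕ} (hm : m ∈ odds x) (h : m ≤ M) : m ∈ odds M :=
    mem_odds.2 ⟨(mem_odds.1 hm).1, h⟩
  have hne : ∀ m n, p ∣ m → M < m → n ∈ odds x → p ∣ n → n ≤ M → m - M ≠ ψ n := by
    intro m n hpm hm hn hpn hnM heq
    have hadd : ψ n + M = m := by omega
    exact (hψ n (mem_odds_self hn hnM) hpn).2.2.1 (hadd ▸ hpm)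
  refine patternBalanced_of_injOn (fun m => if M < m then m - M else ψ m) (fun m hm hpm => ?_) ?_
  · suffices h : ∀ n ≤ m, ¬ p ∣ n ∧ SamePattern p m n →
        n ∈ odds x ∧ ¬ p ∣ n ∧ SamePattern p m n by
      split_ifs with hMm
      · refine h _ (Nat.sub_le m M) ⟨?_, fun q hqp hq => ?_⟩
        · rwa [Nat.dvd_sub_iff_right hMm.le hpm]
        · exact (Nat.dvd_sub_iff_left hMm.le (hM q hqp hq)).symm
      · obtain ⟨hle, hnd, -, hpat⟩ := hψ m (mem_odds_self hm (not_lt.1 hMm)) hpm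
        exact h _ hle ⟨hnd, hpat⟩
    exact fun n hnm hn =>
      ⟨mem_odds.2 ⟨(hn.2.odd_iff hp2).1 (mem_odds.1 hm).1, hnm.trans (mem_odds.1 hm).2⟩, hn⟩
  · rintro m ⟨hm, hpm⟩ n ⟨hn, hpn⟩ heq
    dsimp only at heq
    split_ifs at heq with hMm hMn hMn
    · omega
    · exact absurd heq (hne m n hpm hMm hn hpn (not_lt.1 hMn))
    · exact absurd heq.symm (hne n m hpn hMn hm hpm (not_lt.1 hMm))
    · exact hinj m (mem_odds_self hm (not_lt.1 hMm)) hpm n (mem_odds_self hn (not_lt.1 hMn)) hpn heq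

lemma patternBalanced_odds_three (x : ℕ) : PatternBalanced (odds x) 3 :=
  patternBalanced_odds_of_sub (M := 2) (by decide) (by decide) (by decide) (· / 3)
    (by decide) (by decide) x

lemma patternBalanced_odds_five (x : ℕ) : PatternBalanced (odds x) 5 :=
  patternBalanced_odds_of_sub (M := 6) (by decide) (by decide) (by decide) (· / 5)
    (by decide) (by decide) x

lemma patternBalanced_odds_seven (x : ℕ) : PatternBalanced (odds x) 7 :=
  patternBalanced_odds_of_sub (M := 30) (by decide) (by decide) (by decide) (· / 7)
    (by decide +kernel) (by decide +kernel) x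

-- The quotient `121 / 11` is still a multiple of `11`; the prime `23` has the same pattern.
lemma patternBalanced_odds_eleven (x : ℕ) : PatternBalanced (odds x) 11 :=
  patternBalanced_odds_of_sub (M := 210) (by decide) (by decide) (by decide +kernel)
    (fun m => if m = 121 then 23 else m / 11) (by decide +kernel) (by decide +kernel) x

/-! ### Primes `p ≥ 13` -/

/-- The largest prime factor of `n` that exceeds `p`, or `1` if there is none. -/
def topPrime (p n : ℕ) : ℕ :=
  (insert 1 {q ∈ n.primeFactors | p < q}).max' (insert_nonempty _ _)

lemma topPrime_eq_iff {p n b : ℕ} (hn : n ≠ 0) :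
    topPrime p n = b ↔
      (b = 1 ∨ b.Prime ∧ p < b ∧ b ∣ n) ∧ ∀ q, q.Prime → p < q → q ∣ n → q ≤ b := by
  rw [topPrime, max'_eq_iff]
  simp only [mem_insert, mem_filter, Nat.mem_primeFactors]
  constructor
  · rintro ⟨hb, hmax⟩
    exact ⟨hb.imp_right fun h => ⟨h.1.1, h.2, h.1.2.1⟩,
      fun q hq hpq hqn => hmax q (.inr ⟨⟨hq, hqn, hn⟩, hpq⟩)⟩
  · rintro ⟨hb, hmax⟩
    refine ⟨hb.imp_right fun h => ⟨⟨h.1, h.2.2, hn⟩, h.2.1⟩, ?_⟩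
    rintro q (rfl | hq)
    · rcases hb with rfl | hb
      exacts [le_rfl, hb.1.one_le]
    · exact hmax q hq.1.1 hq.2 hq.1.2.1

lemma topPrime_eq_one_or_prime (p n : ℕ) :
    topPrime p n = 1 ∨ (topPrime p n).Prime ∧ p < topPrime p n := by
  have hmem := max'_mem _ (insert_nonempty 1 {q ∈ n.primeFactors | p < q})
  rw [mem_insert, mem_filter] at hmem
  exact hmem.imp_right (And.imp_left Nat.prime_of_mem_primeFactors)

lemma topPrime_dvd {p n : ℕ} (hn : n ≠ 0) : topPrime p n ∣ n := by
  rcases ((topPrime_eq_iff hn).1 rfl).1 with h | h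
  exacts [h ▸ one_dvd n, h.2.2]

lemma not_dvd_topPrime {p q n : ℕ} (hq : q.Prime) (hqp : q ≤ p) : ¬ q ∣ topPrime p n := by
  rcases topPrime_eq_one_or_prime p n with h | h
  · rw [h]
    exact hq.not_dvd_one
  · rw [Nat.prime_dvd_prime_iff_eq hq h.1]
    exact (hqp.trans_lt h.2).ne

/-- What remains of `m` after removing `topPrime p m` and all factors `p`. -/
def core (p m : ℕ) : ℕ := ordCompl[p] (m / topPrime p m)

lemma core_mul {p k b : ℕ} (hpk : ¬ p ∣ k) (hb0 : 0 < b) (hb : topPrime p (k * b) = b) :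
    core p (k * b) = k := by
  rw [core, hb, Nat.mul_div_cancel _ hb0, Nat.factorization_eq_zero_of_not_dvd hpk, pow_zero,
    Nat.div_one]

lemma exists_core_mul_eq (p : ℕ) {m : ℕ} (hm : m ≠ 0) :
    ∃ a, core p m * (p ^ a * topPrime p m) = m :=
  ⟨(m / topPrime p m).factorization p, by
    rw [core, ← mul_assoc, mul_comm _ (p ^ _), Nat.ordProj_mul_ordCompl_eq_self,
      Nat.div_mul_cancel (topPrime_dvd hm)]⟩

lemma not_dvd_core {p m : ℕ} (hp : p.Prime) (hm : m ≠ 0) : ¬ p ∣ core p m :=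
  Nat.not_dvd_ordCompl hp (Nat.div_ne_zero_iff_of_dvd (topPrime_dvd hm) |>.2
    ⟨hm, ne_zero_of_dvd_ne_zero hm (topPrime_dvd hm)⟩)

lemma topPrime_core_mul (p : ℕ) {m : ℕ} (hm : m ≠ 0) :
    topPrime p (core p m * topPrime p m) = topPrime p m := by
  obtain ⟨a, ha⟩ := exists_core_mul_eq p hm
  have hdvd : core p m * topPrime p m ∣ m :=
    Dvd.intro (p ^ a) (by rw [mul_assoc, mul_comm (topPrime p m), ha])
  obtain ⟨htop, hmax⟩ := (topPrime_eq_iff hm).1 (rfl : topPrime p m = _)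
  exact (topPrime_eq_iff (ne_zero_of_dvd_ne_zero hm hdvd)).2
    ⟨htop.imp_right fun h => ⟨h.1, h.2.1, dvd_mul_left _ _⟩,
      fun q hq hpq hqn => hmax q hq hpq (hqn.trans hdvd)⟩

lemma samePattern_core {p m : ℕ} (hp : p.Prime) (hm : m ≠ 0) : SamePattern p m (core p m) := by
  obtain ⟨a, ha⟩ := exists_core_mul_eq p hm
  have hpat := samePattern_mul (k := core p m) (b := p ^ a * topPrime p m) fun q hqp hq => by
    rw [hq.dvd_mul, not_or]
    exact ⟨fun h => hqp.ne ((Nat.prime_dvd_prime_iff_eq hq hp).1 (hq.dvd_of_dvd_pow h)),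
      not_dvd_topPrime hq hqp.le⟩
  rwa [ha] at hpat

/-- The `b ≤ y` that occur as `topPrime p m` for some `m` with `core p m = k`, where `¬ p ∣ k`. -/
def cofactors (p k y : ℕ) : Finset ℕ := {b ∈ Icc 1 y | topPrime p (k * b) = b}

lemma mem_cofactors {p k y b : ℕ} :
    b ∈ cofactors p k y ↔ (1 ≤ b ∧ b ≤ y) ∧ topPrime p (k * b) = b := by
  rw [cofactors, mem_filter, mem_Icc]

lemma cofactors_mono (p k : ℕ) : Monotone (cofactors p k) := fun _ _ h =>
  filter_subset_filter _ (Icc_subset_Icc_right h)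

lemma eq_one_or_prime_of_mem_cofactors {p k y b : ℕ} (hb : b ∈ cofactors p k y) :
    b = 1 ∨ b.Prime ∧ p < b :=
  (mem_cofactors.1 hb).2 ▸ topPrime_eq_one_or_prime p (k * b)

-- The prime `2` is not a cofactor, which makes up for `1`.
lemma card_cofactors_le_primeCounting {p y : ℕ} (k : ℕ) (hp : 2 ≤ p) (hy : 2 ≤ y) :
    #(cofactors p k y) ≤ π y := by
  have hsub : cofactors p k y ⊆ insert 1 (y.primesLE.erase 2) := fun b hb => by
    rw [mem_insert, mem_erase, Nat.mem_primesLE]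
    exact (eq_one_or_prime_of_mem_cofactors hb).imp_right fun h =>
      ⟨(hp.trans_lt h.2).ne', (mem_cofactors.1 hb).1.2, h.1⟩
  calc #(cofactors p k y) ≤ #(insert 1 (y.primesLE.erase 2)) := card_le_card hsub
    _ ≤ #(y.primesLE.erase 2) + 1 := card_insert_le _ _
    _ = π y := by
      rw [card_erase_add_one (Nat.mem_primesLE.2 ⟨hy, Nat.prime_two⟩),
        Nat.primesLE_card_eq_primeCounting]

lemma mem_cofactors_of_prime {p k w y q : ℕ} (hk : k ≠ 0) (hpw : p ≤ w)
    (hne : (cofactors p k w).Nonempty) (hq : q.Prime) (hwq : w < q) (hqy : q ≤ y) :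
    q ∈ cofactors p k y := by
  obtain ⟨b, hb⟩ := hne
  obtain ⟨⟨hb1, hbw⟩, htop⟩ := mem_cofactors.1 hb
  refine mem_cofactors.2 ⟨⟨hq.one_le, hqy⟩, (topPrime_eq_iff (mul_ne_zero hk hq.ne_zero)).2
    ⟨.inr ⟨hq, by omega, dvd_mul_left q k⟩, fun r hr hpr hrkq => ?_⟩⟩
  rcases hr.dvd_mul.1 hrkq with hrk | hrq
  · have hmax := ((topPrime_eq_iff (mul_ne_zero hk (Nat.pos_iff_ne_zero.1 hb1))).1 htop).2
    exact ((hmax r hr hpr (hrk.mul_right b)).trans hbw).trans hwq.le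
  · exact ((Nat.prime_dvd_prime_iff_eq hr hq).1 hrq).le

lemma two_mul_card_cofactors_div_le {p k y : ℕ} (hk : k ≠ 0) (hp : 13 ≤ p) (hy : p ≤ y / p) :
    2 * #(cofactors p k (y / p)) ≤ #(cofactors p k y) := by
  set w := y / p
  rcases (cofactors p k w).eq_empty_or_nonempty with hempty | hne
  · simp [hempty]
  have hwy : 13 * w ≤ y := (Nat.mul_le_mul_right w hp).trans (Nat.mul_div_le y p)
  have hsub : y.primesLE \ w.primesLE ∪ cofactors p k w ⊆ cofactors p k y := by
    refine union_subset (fun q hq => ?_) (cofactors_mono p k (by omega))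
    rw [mem_sdiff, Nat.mem_primesLE, Nat.mem_primesLE] at hq
    exact mem_cofactors_of_prime hk hy hne hq.1.2 (not_le.1 fun h => hq.2 ⟨h, hq.1.2⟩) hq.1.1
  have hdisj : Disjoint (y.primesLE \ w.primesLE) (cofactors p k w) := by
    refine disjoint_left.2 fun q hq hqw => ?_
    rw [mem_sdiff, Nat.mem_primesLE, Nat.mem_primesLE] at hq
    exact hq.2 ⟨(mem_cofactors.1 hqw).1.2, hq.1.2⟩
  have hcard := card_le_card hsub
  rw [card_union_of_disjoint hdisj] at hcard
  have hprimes := le_card_sdiff w.primesLE y.primesLE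
  simp only [Nat.primesLE_card_eq_primeCounting] at hprimes
  have hπ := (two_mul_primeCounting_le w).trans (Nat.monotone_primeCounting hwy)
  have hw := card_cofactors_le_primeCounting (y := w) k (show 2 ≤ p by omega) (by omega)
  omega

lemma sum_range_div_pow_le {N : ℕ → ℕ} {p : ℕ} (hmono : Monotone N) (h0 : N 0 = 0)
    (hdouble : ∀ y, p ≤ y / p → 2 * N (y / p) ≤ N y) (n y : ℕ) :
    ∑ a ∈ range n, N (y / p ^ (a + 1)) ≤ N y := by
  induction n generalizing y with
  | zero => simp
  | succ n ih =>
    have hdiv : ∀ a, y / p ^ (a + 1 + 1) = y / p / p ^ (a + 1) := fun a => by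
      rw [pow_succ', Nat.div_div_eq_div_mul]
    simp only [sum_range_succ', hdiv, zero_add, pow_one]
    rcases lt_or_ge (y / p) p with hlt | hge
    · have hzero : ∀ a ∈ range n, N (y / p / p ^ (a + 1)) = 0 := fun a _ => by
        rw [Nat.div_eq_of_lt (hlt.trans_le (Nat.le_self_pow a.succ_ne_zero p)), h0]
      rw [sum_eq_zero hzero, zero_add]
      exact hmono (Nat.div_le_self y p)
    · have := ih (y / p)
      have := hdouble y hge
      omega

lemma card_dvd_core_eq_le {p k : ℕ} (hp : p.Prime) (hpk : ¬ p ∣ k) (x : ℕ) :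
    #{m ∈ odds x | p ∣ m ∧ core p m = k} ≤
      ∑ a ∈ range x, #(cofactors p k (x / k / p ^ (a + 1))) := by
  have hk : 0 < k := Nat.pos_of_ne_zero (by rintro rfl; simp at hpk)
  calc #{m ∈ odds x | p ∣ m ∧ core p m = k}
      ≤ #((range x).biUnion fun a =>
          (cofactors p k (x / k / p ^ (a + 1))).image (k * p ^ (a + 1) * ·)) := ?_
    _ ≤ ∑ a ∈ range x, #(cofactors p k (x / k / p ^ (a + 1))) :=
        card_biUnion_le.trans (sum_le_sum fun a _ => card_image_le)
  refine card_le_card fun m hm => ?_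
  obtain ⟨hmx, hpm, rfl⟩ := mem_filter.1 hm
  have hm0 : m ≠ 0 := (mem_odds.1 hmx).1.pos.ne'
  obtain ⟨e, he⟩ := exists_core_mul_eq p hm0
  obtain _ | a := e
  · rw [pow_zero, one_mul] at he
    exact absurd (he ▸ hpm) (hp.not_dvd_mul hpk (not_dvd_topPrime hp le_rfl))
  have hle : topPrime p m * core p m * p ^ (a + 1) ≤ x := by
    rw [mul_comm (topPrime p m), mul_assoc, mul_comm (topPrime p m), he]
    exact (mem_odds.1 hmx).2
  have htop : 0 < topPrime p m := Nat.pos_of_dvd_of_pos (topPrime_dvd hm0) (by omega)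
  refine mem_biUnion.2 ⟨a, mem_range.2 ?_, mem_image.2 ⟨topPrime p m, mem_cofactors.2
    ⟨⟨htop, ?_⟩, topPrime_core_mul p hm0⟩, by rw [mul_assoc, he]⟩⟩
  · calc a < p ^ (a + 1) := a.lt_succ_self.trans (Nat.lt_pow_self hp.one_lt)
      _ ≤ topPrime p m * core p m * p ^ (a + 1) :=
        Nat.le_mul_of_pos_left _ (Nat.mul_pos htop hk)
      _ ≤ x := hle
  · rwa [Nat.div_div_eq_div_mul, Nat.le_div_iff_mul_le (Nat.mul_pos hk (pow_pos hp.pos _)),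
      ← mul_assoc]

lemma card_cofactors_le_card_not_dvd_core_eq {p k : ℕ} (hp : p.Prime) (hpk : ¬ p ∣ k)
    (hk : Odd k) (x : ℕ) :
    #(cofactors p k (x / k)) ≤ #{m ∈ odds x | ¬ p ∣ m ∧ core p m = k} := by
  refine card_le_card_of_injOn (k * ·) (fun b hb => ?_)
    fun b _ c _ h => Nat.eq_of_mul_eq_mul_left hk.pos h
  obtain ⟨⟨hb1, hbx⟩, htop⟩ := mem_cofactors.1 hb
  refine mem_coe.2 (mem_filter.2 ⟨mem_odds.2 ⟨hk.mul ?_, ?_⟩, ?_, core_mul hpk hb1 htop⟩)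
  · rcases eq_one_or_prime_of_mem_cofactors hb with rfl | h
    exacts [odd_one, h.1.odd_of_ne_two (hp.two_le.trans_lt h.2).ne']
  · exact (Nat.mul_le_mul_left k hbx).trans (Nat.mul_div_le x k)
  · exact hp.not_dvd_mul hpk (htop ▸ not_dvd_topPrime hp le_rfl)

lemma patternBalanced_odds_of_thirteen_le {p : ℕ} (hp : p.Prime) (hp13 : 13 ≤ p) (x : ℕ) :
    PatternBalanced (odds x) p := by
  have ne_zero {m : ℕ} (hm : m ∈ odds x) : m ≠ 0 := (mem_odds.1 hm).1.pos.ne'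
  refine patternBalanced_of_card_fiber_le (core p)
    (fun m hm => samePattern_core hp (ne_zero hm)) fun k hk => ?_
  obtain ⟨m, hm, rfl⟩ := mem_image.1 hk
  have hpk : ¬ p ∣ core p m := not_dvd_core hp (ne_zero hm)
  have hodd : Odd (core p m) :=
    ((samePattern_core hp (ne_zero hm)).odd_iff (by omega)).1 (mem_odds.1 hm).1
  calc #{n ∈ odds x | p ∣ n ∧ core p n = core p m}
      ≤ ∑ a ∈ range x, #(cofactors p (core p m) (x / core p m / p ^ (a + 1))) :=
        card_dvd_core_eq_le hp hpk x
    _ ≤ #(cofactors p (core p m) (x / core p m)) :=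
        sum_range_div_pow_le (fun _ _ h => card_le_card (cofactors_mono _ _ h)) rfl
          (fun _ => two_mul_card_cofactors_div_le hodd.pos.ne' hp13) _ _
    _ ≤ #{n ∈ odds x | ¬ p ∣ n ∧ core p n = core p m} :=
        card_cofactors_le_card_not_dvd_core_eq hp hpk hodd x

lemma patternBalanced_odds {p : ℕ} (hp : p.Prime) (hp2 : p ≠ 2) (x : ℕ) :
    PatternBalanced (odds x) p := by
  rcases le_or_gt 13 p with h13 | h13
  · exact patternBalanced_odds_of_thirteen_le hp h13 x
  interval_cases p
  all_goals first
    | exact patternBalanced_odds_three x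
    | exact patternBalanced_odds_five x
    | exact patternBalanced_odds_seven x
    | exact patternBalanced_odds_eleven x
    | exact absurd rfl hp2
    | exact absurd hp (by decide)

/-! ### Stochastic domination and Hall's theorem -/

lemma PatternBalanced.sum_add_le {A : Finset ℕ} {p : ℕ} (hA : PatternBalanced A p) {f₀ f₁ : ℕ → ℕ}
    (h₀ : ∀ m m', SamePattern p m m' → f₀ m = f₀ m')
    (h₁ : ∀ m m', SamePattern p m m' → f₁ m = f₁ m') (hle : ∀ m, f₁ m ≤ f₀ m) :
    ∑ m ∈ A, (f₀ m + f₁ m) ≤ 2 * ∑ m ∈ A, if p ∣ m then f₁ m else f₀ m := by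
  have hloss := hA (fun m => f₀ m - f₁ m) fun m m' h => by rw [h₀ m m' h, h₁ m m' h]
  have hsum : ∑ m ∈ A, (f₀ m + f₁ m) = 2 * ∑ m ∈ A, f₁ m +
      (∑ m ∈ A with p ∣ m, (f₀ m - f₁ m) + ∑ m ∈ A with ¬ p ∣ m, (f₀ m - f₁ m)) := by
    rw [sum_filter_add_sum_filter_not, mul_sum, ← sum_add_distrib]
    exact sum_congr rfl fun m _ => by have := hle m; omega
  have hif : ∑ m ∈ A, (if p ∣ m then f₁ m else f₀ m) =
      ∑ m ∈ A, f₁ m + ∑ m ∈ A with ¬ p ∣ m, (f₀ m - f₁ m) := by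
    rw [sum_filter, ← sum_add_distrib]
    refine sum_congr rfl fun m _ => ?_
    have := hle m
    split_ifs <;> omega
  omega

-- The largest prime of `P` is removed first, so that `PatternBalanced` applies to it.
lemma card_mul_sum_powerset_le {A P : Finset ℕ} (hP : ∀ p ∈ P, p.Prime)
    (hA : ∀ p ∈ P, PatternBalanced A p) {f : Finset ℕ → ℕ} (hf : Antitone f) :
    #A * ∑ T ∈ P.powerset, f T ≤ 2 ^ #P * ∑ m ∈ A, f {p ∈ P | p ∣ m} := by
  induction P using Finset.induction_on_max generalizing f with
  | empty => simp
  | insert p P hlt ih =>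
    have hpP : p ∉ P := fun h => lt_irrefl p (hlt p h)
    have pattern_eq {m m' : ℕ} (h : SamePattern p m m') :
        {q ∈ P | q ∣ m} = {q ∈ P | q ∣ m'} :=
      filter_congr fun q hq => h q (hlt q hq) (hP q (mem_insert_of_mem hq))
    have hstep := (hA p (mem_insert_self p P)).sum_add_le
      (f₀ := fun m => f {q ∈ P | q ∣ m}) (f₁ := fun m => f (insert p {q ∈ P | q ∣ m}))
      (fun m m' h => by rw [pattern_eq h]) (fun m m' h => by rw [pattern_eq h])
      (fun m => hf (subset_insert p _))
    calc #A * ∑ T ∈ (insert p P).powerset, f T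
        = #A * ∑ T ∈ P.powerset, (f T + f (insert p T)) := by
          rw [sum_powerset_insert hpP, sum_add_distrib]
      _ ≤ 2 ^ #P * ∑ m ∈ A, (f {q ∈ P | q ∣ m} + f (insert p {q ∈ P | q ∣ m})) :=
          ih (fun q hq => hP q (mem_insert_of_mem hq)) (fun q hq => hA q (mem_insert_of_mem hq))
            fun S T h => Nat.add_le_add (hf h) (hf (insert_subset_insert p h))
      _ ≤ 2 ^ #P * (2 * ∑ m ∈ A, if p ∣ m then f (insert p {q ∈ P | q ∣ m})
            else f {q ∈ P | q ∣ m}) := Nat.mul_le_mul_left _ hstep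
      _ = 2 ^ #(insert p P) * ∑ m ∈ A, f {q ∈ insert p P | q ∣ m} := by
          rw [card_insert_of_notMem hpP, pow_succ, mul_assoc]
          simp only [filter_insert, apply_ite f]

lemma card_mul_card_filter_powerset_le {A P : Finset ℕ} (hP : ∀ p ∈ P, p.Prime)
    (hA : ∀ p ∈ P, PatternBalanced A p) {r : Finset ℕ → Prop} [DecidablePred r]
    (hr : ∀ S T, S ⊆ T → r T → r S) :
    #A * #{T ∈ P.powerset | r T} ≤ 2 ^ #P * #{m ∈ A | r {p ∈ P | p ∣ m}} := by
  simp only [card_filter]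
  refine card_mul_sum_powerset_le hP hA fun S T hST => ?_
  by_cases hT : r T
  · rw [if_pos hT, if_pos (hr S T hST hT)]
  · rw [if_neg hT]
    exact Nat.zero_le _

lemma card_divisors_of_squarefree_s9 {u : ℕ} (hsf : Squarefree u) :
    #u.divisors = 2 ^ #u.primeFactors := by
  rw [Nat.card_divisors hsf.ne_zero, ← prod_const]
  refine prod_congr rfl fun p hp => ?_
  rw [Nat.factorization_eq_one_of_squarefree hsf (Nat.prime_of_mem_primeFactors hp)
    (Nat.dvd_of_mem_primeFactors hp)]

lemma disjoint_filter_dvd_primeFactors_iff {u d m : ℕ} (hu : u ≠ 0) (hd : d ∣ u) :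
    Disjoint {p ∈ u.primeFactors | p ∣ m} d.primeFactors ↔ d.Coprime m := by
  rw [disjoint_left]
  refine ⟨fun h => Nat.coprime_of_dvd fun q hq hqd hqm => ?_, fun h q hq hqd => ?_⟩
  · exact h (mem_filter.2 ⟨hq.mem_primeFactors (hqd.trans hd) hu, hqm⟩)
      (hq.mem_primeFactors hqd (ne_zero_of_dvd_ne_zero hu hd))
  · exact Nat.not_coprime_of_dvd_of_dvd (Nat.prime_of_mem_primeFactors hqd).one_lt
      (Nat.dvd_of_mem_primeFactors hqd) (mem_filter.1 hq).2 h

-- Distinct `d` leave distinct complements `u.primeFactors \ d.primeFactors` among the patterns.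
lemma card_le_card_exists_coprime {u : ℕ} (hsf : Squarefree u) {B X : Finset ℕ}
    (hcard : #B = 2 ^ #u.primeFactors) (hB : ∀ p ∈ u.primeFactors, PatternBalanced B p)
    (hX : X ⊆ u.divisors) : #X ≤ #{m ∈ B | ∃ d ∈ X, d.Coprime m} := by
  have hdvd : ∀ d ∈ X, d ∣ u := fun d hd => Nat.dvd_of_mem_divisors (hX hd)
  have hpatterns : #X ≤ #{T ∈ u.primeFactors.powerset | ∃ d ∈ X, Disjoint T d.primeFactors} := by
    refine card_le_card_of_injOn (fun d => u.primeFactors \ d.primeFactors)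
      (fun d hd => mem_coe.2 <| mem_filter.2
        ⟨mem_powerset.2 sdiff_subset, d, hd, sdiff_disjoint⟩) fun d hd e he h => ?_
    refine Nat.prod_primeFactors_invOn_squarefree.2.injOn (hsf.squarefree_of_dvd (hdvd d hd))
      (hsf.squarefree_of_dvd (hdvd e he)) ?_
    change d.primeFactors = e.primeFactors
    rw [← Finset.sdiff_sdiff_eq_self (Nat.primeFactors_mono (hdvd d hd) hsf.ne_zero),
      ← Finset.sdiff_sdiff_eq_self (Nat.primeFactors_mono (hdvd e he) hsf.ne_zero)]
    exact congrArg (u.primeFactors \ ·) h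
  have hdom := card_mul_card_filter_powerset_le (fun p => Nat.prime_of_mem_primeFactors) hB
    (r := fun T => ∃ d ∈ X, Disjoint T d.primeFactors)
    fun S T hST ⟨d, hd, hT⟩ => ⟨d, hd, hT.mono_left hST⟩
  rw [hcard] at hdom
  refine (hpatterns.trans (Nat.le_of_mul_le_mul_left hdom (by positivity))).trans
    (card_le_card (monotone_filter_right B fun m _ ⟨d, hd, h⟩ => ⟨d, hd, ?_⟩))
  exact (disjoint_filter_dvd_primeFactors_iff hsf.ne_zero (hdvd d hd)).1 h

lemma coprimeMatching_of_hall {A B : Finset ℕ} (hcard : #B ≤ #A)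
    (hall : ∀ X ⊆ A, #X ≤ #{b ∈ B | ∃ a ∈ X, a.Coprime b}) : CoprimeMatching A B := by
  obtain ⟨ψ, hinj, hψ⟩ := (Finset.all_card_le_biUnion_card_iff_exists_injective
    fun a : A => {b ∈ B | a.1.Coprime b}).1 fun X => by
      have hX := hall (X.map (.subtype _)) (map_subtype_subset X)
      rw [card_map] at hX
      refine hX.trans (card_le_card fun b hb => ?_)
      simpa [and_left_comm] using hb
  let Ψ : ℕ → ℕ := fun a => if h : a ∈ A then ψ ⟨a, h⟩ else 0
  have hΨ : ∀ a ∈ A, Ψ a ∈ B ∧ a.Coprime (Ψ a) := fun a ha => by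
    simpa only [Ψ, dif_pos ha] using mem_filter.1 (hψ ⟨a, ha⟩)
  have hinjOn : Set.InjOn Ψ A := fun a ha b hb h => by
    simp only [Ψ, dif_pos (mem_coe.1 ha), dif_pos (mem_coe.1 hb)] at h
    exact congrArg Subtype.val (hinj h)
  have hmaps : Set.MapsTo Ψ A B := fun a ha => (hΨ a ha).1
  exact ⟨Ψ, ⟨hmaps, hinjOn, surjOn_of_injOn_of_card_le Ψ hmaps hinjOn hcard⟩,
    fun a ha => (hΨ a ha).2⟩

theorem coprimeMatching_divisors {u : ℕ} (hsf : Squarefree u) {B : Finset ℕ}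
    (hcard : #B = 2 ^ #u.primeFactors) (hB : ∀ p ∈ u.primeFactors, PatternBalanced B p) :
    CoprimeMatching u.divisors B :=
  coprimeMatching_of_hall (hcard.trans (card_divisors_of_squarefree_s9 hsf).symm).le
    fun _ hX => card_le_card_exists_coprime hsf hcard hB hX

theorem stmt_9_general (ℓ u : ℕ) (hsf : Squarefree u) (hodd : Odd u)
    (hω : u.primeFactors.card = ℓ) :
    CoprimeMatching u.divisors ((Finset.Icc 1 (2 ^ (ℓ + 1))).filter (fun x => Odd x)) := by
  subst hω
  rw [pow_succ']
  refine coprimeMatching_divisors hsf (card_odds _) fun p hp => ?_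
  have hpu : Odd p := hodd.of_dvd_nat (Nat.dvd_of_mem_primeFactors hp)
  exact patternBalanced_odds (Nat.prime_of_mem_primeFactors hp)
    (by rintro rfl; exact absurd hpu (by decide)) _

theorem stmt_9 (ℓ : ℕ) (hℓ : 0 < ℓ) (hℓ44 : ℓ ≤ 44) (u : ℕ)
    (hsf : Squarefree u) (hodd : Odd u) (hω : u.primeFactors.card = ℓ) :
    CoprimeMatching u.divisors
      ((Finset.Icc 1 (2 ^ (ℓ + 1))).filter (fun x => Odd x)) :=
  stmt_9_general ℓ u hsf hodd hω
end
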